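/- Let D ⊆ [0,1] be an interval, let 0 ≤ a < 2 and C > 0, and let F : ℝ → ℝ be continuous with |F(s)| ≤ C·max(e^{a·s}, e^{−a·s}) for all s ∈ ℝ. Then lim_{δ→0⁺} ∫_D F( log q_min(x,δ) + (1/2)·log δ ) dx = Leb(D)·∫_ℝ F(s)·η_log(s) ds. -/

import Mathlib

open MeasureTheory Filter

/-- The limiting density of the logarithm of smallest denominators. -/
noncomputable def etaLog (s : ℝ) : ℝ :=
  if s ≤ 0 then 6 / Real.pi ^ 2 * Real.exp (2 * s)
  else if s ≤ Real.log 2 then 6 / Real.pi ^ 2 * (-Real.exp (2 * s) + 2 + 4 * s)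
  else 6 / Real.pi ^ 2 * (-Real.exp (2 * s) + 2
    + 2 * Real.exp (2 * s) * Real.sqrt (1 / 4 - Real.exp (-2 * s))
    - 4 * Real.log (1 / 2 + Real.sqrt (1 / 4 - Real.exp (-2 * s))))

/-- The smallest denominator of all rationals in the interval `(x - δ/2, x + δ/2)`. -/
noncomputable def qmin (x δ : ℝ) : ℕ :=
  sInf {q : ℕ | 0 < q ∧ ∃ p : ℤ, x - δ / 2 < (p : ℝ) / q ∧ (p : ℝ) / q < x + δ / 2}

/-!
Write `Λ_δ(x) = log q_min(x, δ) + ½ log δ`. The law of `Λ_δ` under the uniform measure of a set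
converges weakly to the density `η_log`, and integrals of exponentially bounded functions follow
because the tails of `Λ_δ` are `O(e^{-2t})`: few points lie close to a fraction of denominator
`≪ δ^{-1/2}`, and by Dirichlet's theorem a point with large `q_min` lies close to one.

On `[0, 1]` the limit is computed from Farey mediants, which turn the distribution function of
`Λ_δ` into a Riemann sum over primitive lattice points. To localise to an arbitrary set, note that
a Möbius map `y ↦ (ay + b) / (cy + d)` of `SL(2, ℤ)` permutes the rationals, and for `0 < c ≤ κd`
with `κ` small it is nearly affine on `[0, 1]` and multiplies denominators by nearly `d`. It
therefore transports the limit to the image of `[0, 1]`, up to a factor tending to `1` with `κ`.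
Since these images form a fine cover of almost every point, Vitali's covering theorem does the
rest.
-/

open Set Topology
open scoped ENNReal NNReal

section WeakConvergence

variable {ι : Type*} {l : Filter ι} {μ : ι → ProbabilityMeasure ℝ} {ν : ProbabilityMeasure ℝ}

lemma tendsto_probabilityMeasure_of_tendsto_Iic [l.IsCountablyGenerated]
    (h : ∀ t, Tendsto (fun i => (μ i : Measure ℝ).real (Iic t)) l
      (𝓝 ((ν : Measure ℝ).real (Iic t)))) :
    Tendsto μ l (𝓝 ν) := by
  refine (isPiSystem_Ioc (id : ℝ → ℝ) id).tendsto_probabilityMeasure_of_tendsto_of_mem ?_ ?_ ?_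
  · rintro _ ⟨s, t, -, rfl⟩
    exact measurableSet_Ioc
  · intro u hu x hx
    obtain ⟨ε, hε, hball⟩ := Metric.isOpen_iff.1 hu x hx
    refine ⟨Ioc (x - ε / 2) (x + ε / 2), ⟨_, _, by simp only [id]; linarith, rfl⟩,
      Ioc_mem_nhds (by linarith) (by linarith), fun y hy => hball ?_⟩
    rw [Metric.mem_ball, Real.dist_eq, abs_lt]
    constructor <;> linarith [hy.1, hy.2]
  · rintro _ ⟨s, t, hst : s < t, rfl⟩
    have real_Ioc (ρ : ProbabilityMeasure ℝ) :
        (ρ : Measure ℝ).real (Ioc s t) =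
          (ρ : Measure ℝ).real (Iic t) - (ρ : Measure ℝ).real (Iic s) := by
      rw [← Iic_sdiff_Iic, measureReal_sdiff (Iic_subset_Iic.2 hst.le) measurableSet_Iic]
    rw [← NNReal.tendsto_coe]
    change Tendsto (fun i => (μ i : Measure ℝ).real (Ioc s t)) l
      (𝓝 ((ν : Measure ℝ).real (Ioc s t)))
    simpa only [real_Ioc] using (h t).sub (h s)

lemma lintegral_exp_mul_abs_le {μ : Measure ℝ} {K b β : ℝ} (hK : 0 ≤ K) (hb : 0 ≤ b) (hbβ : b < β)
    (htail : ∀ t : ℝ, μ {s | t < |s|} ≤ ENNReal.ofReal (K * Real.exp (-β * t))) :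
    ∫⁻ s, ENNReal.ofReal (Real.exp (b * |s|)) ∂μ ≤
      ENNReal.ofReal (K * Real.exp β * (1 - Real.exp (b - β))⁻¹) := by
  have shell (s : ℝ) : ENNReal.ofReal (Real.exp (b * |s|)) ≤
      ∑' n : ℕ, {s : ℝ | n - 1 < |s|}.indicator
        (fun _ => ENNReal.ofReal (Real.exp (b * n))) s := by
    refine le_trans ?_ (ENNReal.le_tsum ⌈|s|⌉₊)
    have hmem : s ∈ {u : ℝ | ⌈|s|⌉₊ - 1 < |u|} :=
      sub_lt_iff_lt_add.2 (Nat.ceil_lt_add_one (abs_nonneg s))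
    rw [indicator_of_mem hmem]
    gcongr
    exact Nat.le_ceil _
  have hgeom : HasSum (fun n : ℕ => Real.exp (b * n) * (K * Real.exp (-β * (n - 1))))
      (K * Real.exp β * (1 - Real.exp (b - β))⁻¹) := by
    have hr : Real.exp (b - β) < 1 := Real.exp_lt_one_iff.2 (by linarith)
    convert! (hasSum_geometric_of_lt_one (Real.exp_pos _).le hr).mul_left (K * Real.exp β)
      using 2 with n
    rw [← Real.exp_nat_mul, mul_left_comm, ← Real.exp_add, mul_assoc, ← Real.exp_add]
    ring_nf
  calc ∫⁻ s, ENNReal.ofReal (Real.exp (b * |s|)) ∂μ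
      ≤ ∫⁻ s, ∑' n : ℕ, {s : ℝ | n - 1 < |s|}.indicator
          (fun _ => ENNReal.ofReal (Real.exp (b * n))) s ∂μ := lintegral_mono shell
    _ = ∑' n : ℕ, ENNReal.ofReal (Real.exp (b * n)) * μ {s : ℝ | n - 1 < |s|} := by
        have hmeas (n : ℕ) : MeasurableSet {s : ℝ | n - 1 < |s|} :=
          measurableSet_lt measurable_const measurable_norm
        rw [lintegral_tsum fun n => (measurable_const.indicator (hmeas n)).aemeasurable]
        simp only [lintegral_indicator_const (hmeas _)]
    _ ≤ ∑' n : ℕ, ENNReal.ofReal (Real.exp (b * n) * (K * Real.exp (-β * (n - 1)))) := by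
        refine ENNReal.tsum_le_tsum fun n => ?_
        rw [ENNReal.ofReal_mul (Real.exp_pos _).le]
        gcongr
        exact htail _
    _ = ENNReal.ofReal (K * Real.exp β * (1 - Real.exp (b - β))⁻¹) := by
        rw [← ENNReal.ofReal_tsum_of_nonneg (fun n => by positivity) hgeom.summable, hgeom.tsum_eq]

lemma abs_max_neg_min_le {R : ℝ} (hR : 0 ≤ R) (s : ℝ) : |max (-R) (min s R)| ≤ |s| := by
  rcases le_total 0 s with hs | hs
  · rw [max_eq_right (by linarith [le_min hs hR]), abs_of_nonneg (le_min hs hR), abs_of_nonneg hs]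
    exact min_le_left s R
  · rw [min_eq_left (hs.trans hR), abs_of_nonpos (max_le (by linarith) hs), abs_of_nonpos hs]
    linarith [le_max_right (-R) s]

/-- The function equal to `F` on `[-R, R]` and constant on each side of it. -/
noncomputable def clampedComp (F : ℝ → ℝ) (R s : ℝ) : ℝ := F (max (-R) (min s R))

lemma continuous_clampedComp {F : ℝ → ℝ} (hF : Continuous F) (R : ℝ) :
    Continuous (clampedComp F R) := by
  unfold clampedComp
  fun_prop

lemma abs_integral_sub_integral_clampedComp_le {μ : Measure ℝ} [IsFiniteMeasure μ] {F : ℝ → ℝ}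
    {C a b M R : ℝ} (hF : Continuous F) (ha : 0 ≤ a) (hab : a ≤ b) (hR : 0 ≤ R) (hM : 0 ≤ M)
    (hbound : ∀ s, |F s| ≤ C * Real.exp (a * |s|))
    (hmoment : ∫⁻ s, ENNReal.ofReal (Real.exp (b * |s|)) ∂μ ≤ ENNReal.ofReal M) :
    |∫ s, F s ∂μ - ∫ s, clampedComp F R s ∂μ| ≤ 2 * C * Real.exp (-(b - a) * R) * M := by
  have hC : 0 ≤ C := by simpa using (abs_nonneg _).trans (hbound 0)
  have hexp_int : Integrable (fun s => Real.exp (b * |s|)) μ :=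
    lintegral_ofReal_ne_top_iff_integrable (by fun_prop) (ae_of_all _ fun s => (Real.exp_pos _).le)
      |>.1 (hmoment.trans_lt ENNReal.ofReal_lt_top).ne
  have hexp_le : ∫ s, Real.exp (b * |s|) ∂μ ≤ M := by
    rw [integral_eq_lintegral_of_nonneg_ae (ae_of_all _ fun s => (Real.exp_pos _).le)
      (by fun_prop)]
    exact ENNReal.toReal_le_of_le_ofReal hM hmoment
  have hclamp_bound (s : ℝ) : |clampedComp F R s| ≤ C * Real.exp (a * |s|) :=
    (hbound _).trans (mul_le_mul_of_nonneg_left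
      (Real.exp_le_exp.2 (mul_le_mul_of_nonneg_left (abs_max_neg_min_le hR s) ha)) hC)
  have integrable_of_le {G : ℝ → ℝ} (hG : Continuous G)
      (hle : ∀ s, |G s| ≤ C * Real.exp (a * |s|)) : Integrable G μ :=
    (hexp_int.const_mul C).mono' (by fun_prop) (ae_of_all _ fun s => (hle s).trans (by gcongr))
  have hdiff (s : ℝ) : ‖F s - clampedComp F R s‖ ≤
      2 * C * Real.exp (-(b - a) * R) * Real.exp (b * |s|) := by
    rcases le_total |s| R with hs | hs
    · rw [clampedComp, min_eq_left (abs_le.1 hs).2, max_eq_right (abs_le.1 hs).1, sub_self,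
        norm_zero]
      positivity
    · calc ‖F s - clampedComp F R s‖ ≤ 2 * C * Real.exp (a * |s|) := by
            linarith [norm_sub_le (F s) (clampedComp F R s), Real.norm_eq_abs (F s),
              Real.norm_eq_abs (clampedComp F R s), hbound s, hclamp_bound s]
        _ ≤ 2 * C * Real.exp (-(b - a) * R + b * |s|) := by
            gcongr
            nlinarith [mul_le_mul_of_nonneg_left hs (sub_nonneg.2 hab)]
        _ = _ := by rw [Real.exp_add]; ring
  rw [← integral_sub (integrable_of_le hF hbound)
    (integrable_of_le (continuous_clampedComp hF R) hclamp_bound), ← Real.norm_eq_abs]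
  calc ‖∫ s, (F s - clampedComp F R s) ∂μ‖
      ≤ ∫ s, 2 * C * Real.exp (-(b - a) * R) * Real.exp (b * |s|) ∂μ :=
        norm_integral_le_of_norm_le (hexp_int.const_mul _) (ae_of_all _ hdiff)
    _ ≤ 2 * C * Real.exp (-(b - a) * R) * M := by
        rw [integral_const_mul]
        gcongr

lemma measure_tail_le_of_tendsto [l.NeBot] {U : Set ℝ} (hμ : Tendsto μ l (𝓝 ν)) (hU : IsOpen U)
    {c : ℝ≥0∞} (hle : ∀ᶠ i in l, (μ i : Measure ℝ) U ≤ c) : (ν : Measure ℝ) U ≤ c :=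
  (ProbabilityMeasure.le_liminf_measure_open_of_tendsto hμ hU).trans
    (liminf_le_of_le (by isBoundedDefault) fun _ hb =>
      (hb.and hle).exists.elim fun _ h => h.1.trans h.2)

lemma tendsto_integral_clampedComp {F : ℝ → ℝ} (hF : Continuous F) (R : ℝ)
    (hμ : Tendsto μ l (𝓝 ν)) :
    Tendsto (fun i => ∫ s, clampedComp F R s ∂(μ i : Measure ℝ)) l
      (𝓝 (∫ s, clampedComp F R s ∂(ν : Measure ℝ))) := by
  obtain ⟨B, hB⟩ :=
    (isCompact_Icc (a := -|R|) (b := |R|)).exists_bound_of_continuousOn hF.continuousOn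
  have hmem (s : ℝ) : max (-R) (min s R) ∈ Icc (-|R|) |R| :=
    ⟨le_max_of_le_left (neg_le_neg (le_abs_self R)),
      max_le (neg_le_abs R) ((min_le_right s R).trans (le_abs_self R))⟩
  exact ProbabilityMeasure.tendsto_iff_forall_integral_tendsto.1 hμ
    (BoundedContinuousFunction.ofNormedAddCommGroup (clampedComp F R)
      (continuous_clampedComp hF R) B fun s => hB _ (hmem s))

theorem tendsto_integral_of_tendsto_of_exp_tail [l.NeBot] {F : ℝ → ℝ} {C a β K : ℝ}
    (hμ : Tendsto μ l (𝓝 ν)) (ha : a < β) (hβ : 0 < β) (hK : 0 ≤ K)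
    (htail : ∀ᶠ i in l, ∀ t : ℝ,
      (μ i : Measure ℝ) {s | t < |s|} ≤ ENNReal.ofReal (K * Real.exp (-β * t)))
    (hF : Continuous F) (hbound : ∀ s, |F s| ≤ C * Real.exp (a * |s|)) :
    Tendsto (fun i => ∫ s, F s ∂(μ i : Measure ℝ)) l (𝓝 (∫ s, F s ∂(ν : Measure ℝ))) := by
  have hC : 0 ≤ C := by simpa using (abs_nonneg _).trans (hbound 0)
  set a' := max a 0
  obtain ⟨b, hab, hbβ⟩ : ∃ b, a' < b ∧ b < β := exists_between (max_lt ha hβ)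
  have hb : 0 ≤ b := (le_max_right a 0).trans hab.le
  set M := K * Real.exp β * (1 - Real.exp (b - β))⁻¹
  have hM : 0 ≤ M := by
    have : Real.exp (b - β) < 1 := Real.exp_lt_one_iff.2 (by linarith)
    have : 0 < 1 - Real.exp (b - β) := by linarith
    positivity
  have htailν (t : ℝ) : (ν : Measure ℝ) {s | t < |s|} ≤ ENNReal.ofReal (K * Real.exp (-β * t)) :=
    measure_tail_le_of_tendsto hμ (isOpen_lt continuous_const continuous_abs)
      (htail.mono fun _ h => h t)
  have truncate {R : ℝ} (hR : 0 ≤ R) {ρ : Measure ℝ} [IsFiniteMeasure ρ]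
      (hρ : ∀ t, ρ {s | t < |s|} ≤ ENNReal.ofReal (K * Real.exp (-β * t))) :
      |∫ s, F s ∂ρ - ∫ s, clampedComp F R s ∂ρ| ≤ 2 * C * Real.exp (-(b - a') * R) * M :=
    abs_integral_sub_integral_clampedComp_le hF (le_max_right a 0) hab.le hR hM
      (fun s => (hbound s).trans <| mul_le_mul_of_nonneg_left
        (Real.exp_le_exp.2 (mul_le_mul_of_nonneg_right (le_max_left a 0) (abs_nonneg s))) hC)
      (lintegral_exp_mul_abs_le hK hb hbβ hρ)
  have hsmall : Tendsto (fun R => 2 * C * Real.exp (-(b - a') * R) * M) atTop (𝓝 0) := by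
    have := Real.tendsto_exp_atBot.comp
      (tendsto_id.const_mul_atTop_of_neg (show -(b - a') < 0 by linarith))
    simpa using (this.const_mul (2 * C)).mul_const M
  rw [Metric.tendsto_nhds]
  intro ε hε
  obtain ⟨R, hR, hR0⟩ := ((hsmall.eventually_lt_const (show 0 < ε / 3 by linarith)).and
    (eventually_ge_atTop 0)).exists
  filter_upwards [htail, Metric.tendsto_nhds.1 (tendsto_integral_clampedComp hF R hμ) (ε / 3)
    (by linarith)] with i hi hclamp
  have hi := abs_le.1 (truncate hR0 hi)
  have hlim := abs_le.1 (truncate hR0 htailν)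
  rw [Real.dist_eq, abs_lt] at hclamp ⊢
  constructor <;> linarith [hi.1, hi.2, hlim.1, hlim.2, hclamp.1, hclamp.2]

end WeakConvergence

section SmallestDenominator

/-- The points at distance less than `r` from a fraction `p / q` with `p : ℤ`. -/
def fractionNhds (r : ℝ) (q : ℕ) : Set ℝ := ⋃ p : ℤ, Metric.ball ((p : ℝ) / q) r

lemma mem_fractionNhds {r y : ℝ} {q : ℕ} : y ∈ fractionNhds r q ↔ ∃ p : ℤ, |y - p / q| < r := by
  simp only [fractionNhds, mem_iUnion, Metric.mem_ball, Real.dist_eq]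

lemma measurableSet_fractionNhds (r : ℝ) (q : ℕ) : MeasurableSet (fractionNhds r q) :=
  MeasurableSet.iUnion fun _ => measurableSet_ball

lemma qmin_eq_sInf (y δ : ℝ) : qmin y δ = sInf {q : ℕ | 0 < q ∧ y ∈ fractionNhds (δ / 2) q} := by
  have iff_abs_lt (z : ℝ) : (y - δ / 2 < z ∧ z < y + δ / 2) ↔ |y - z| < δ / 2 := by
    rw [abs_sub_comm, ← Real.dist_eq, ← Metric.mem_ball, Real.ball_eq_Ioo, mem_Ioo]
  simp only [qmin, mem_fractionNhds, iff_abs_lt]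

lemma qmin_spec {δ : ℝ} (hδ : 0 < δ) (y : ℝ) :
    0 < qmin y δ ∧ y ∈ fractionNhds (δ / 2) (qmin y δ) := by
  rw [qmin_eq_sInf]
  refine Nat.sInf_mem (s := {q : ℕ | 0 < q ∧ y ∈ fractionNhds (δ / 2) q}) ?_
  obtain ⟨r, hlo, hhi⟩ := exists_rat_btwn (show y - δ / 2 < y + δ / 2 by linarith)
  refine ⟨r.den, r.den_pos, mem_fractionNhds.2 ⟨r.num, ?_⟩⟩
  rw [← Rat.cast_def, abs_lt]
  constructor <;> linarith

lemma qmin_le {δ y : ℝ} {q : ℕ} (hq : 0 < q) (hy : y ∈ fractionNhds (δ / 2) q) : qmin y δ ≤ q := by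
  rw [qmin_eq_sInf]
  exact Nat.sInf_le ⟨hq, hy⟩

lemma qmin_eq_iff {δ y : ℝ} {q : ℕ} (hδ : 0 < δ) :
    qmin y δ = q ↔ (0 < q ∧ y ∈ fractionNhds (δ / 2) q) ∧
      ∀ n, 0 < n → n < q → y ∉ fractionNhds (δ / 2) n := by
  constructor
  · rintro rfl
    exact ⟨qmin_spec hδ y, fun n hn hlt hy => (qmin_le hn hy).not_gt hlt⟩
  · rintro ⟨⟨hq, hy⟩, hmin⟩
    obtain ⟨hpos, hmem⟩ := qmin_spec hδ y
    exact (qmin_le hq hy).antisymm (not_lt.1 fun hlt => hmin _ hpos hlt hmem)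

lemma qmin_of_nonpos {δ : ℝ} (hδ : δ ≤ 0) (y : ℝ) : qmin y δ = 0 := by
  have hempty (q : ℕ) : fractionNhds (δ / 2) q = ∅ :=
    iUnion_eq_empty.2 fun p => Metric.ball_eq_empty.2 (by linarith)
  simp only [qmin_eq_sInf, hempty, mem_empty_iff_false, and_false, ofPred_false, Nat.sInf_empty]

lemma measurable_qmin (δ : ℝ) : Measurable (fun y => qmin y δ) := by
  rcases le_or_gt δ 0 with hδ | hδ
  · simp only [qmin_of_nonpos hδ, measurable_const]
  refine measurable_to_countable' fun q => ?_
  simp only [preimage, mem_singleton_iff, qmin_eq_iff hδ]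
  refine measurableSet_setOfPred.2 <| .and (.and measurable_const ?_) <| .forall fun n =>
    .imp measurable_const <| .imp measurable_const <| .not ?_ <;>
  exact measurableSet_setOfPred.1 (measurableSet_fractionNhds _ _)

/-- The smallest denominator on its natural logarithmic scale `-log √δ`. -/
noncomputable def logDenom (δ y : ℝ) : ℝ := Real.log (qmin y δ) + 1 / 2 * Real.log δ

lemma measurable_logDenom (δ : ℝ) : Measurable (logDenom δ) :=
  (Real.measurable_log.comp (measurable_from_top.comp (measurable_qmin δ))).add measurable_const

lemma logDenom_eq_log {δ : ℝ} (hδ : 0 < δ) (y : ℝ) :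
    logDenom δ y = Real.log (qmin y δ * √δ) := by
  have := Nat.cast_pos (α := ℝ).2 (qmin_spec hδ y).1
  rw [logDenom, Real.log_mul (by positivity) (by positivity), Real.log_sqrt hδ.le]
  ring

lemma lt_logDenom_iff {δ : ℝ} (hδ : 0 < δ) {t y : ℝ} :
    t < logDenom δ y ↔ Real.exp t / √δ < qmin y δ := by
  have := Nat.cast_pos (α := ℝ).2 (qmin_spec hδ y).1
  rw [logDenom_eq_log hδ, Real.lt_log_iff_exp_lt (by positivity), div_lt_iff₀ (by positivity)]

lemma logDenom_le_iff {δ : ℝ} (hδ : 0 < δ) {t y : ℝ} :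
    logDenom δ y ≤ t ↔ qmin y δ ≤ Real.exp t / √δ := by
  rw [← not_lt, lt_logDenom_iff hδ, not_lt]

end SmallestDenominator

section Tails

lemma volume_Icc_inter_fractionNhds_le {M r : ℝ} {q : ℕ} (hM : 0 ≤ M) (hq : 0 < q)
    (hr : r ≤ 1) :
    volume (Icc (-M) M ∩ fractionNhds r q) ≤ ENNReal.ofReal ((2 * M + 3) * (2 * (q * r))) := by
  set N := ⌊(M + 1) * q⌋₊
  have hcover : Icc (-M) M ∩ fractionNhds r q ⊆
      ⋃ p ∈ Finset.Icc (-N : ℤ) N, Metric.ball ((p : ℝ) / q) r := by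
    rintro y ⟨hy, hyq⟩
    obtain ⟨p, hp⟩ := mem_iUnion.1 hyq
    refine mem_iUnion₂.2 ⟨p, ?_, hp⟩
    have hpq : |(p : ℝ) / q| ≤ M + 1 := by
      have := abs_sub_abs_le_abs_sub ((p : ℝ) / q) y
      rw [Metric.mem_ball, dist_comm, Real.dist_eq] at hp
      linarith [abs_le.2 hy]
    rw [abs_div, Nat.abs_cast, div_le_iff₀ (by positivity), ← Int.cast_abs,
      ← Nat.cast_natAbs] at hpq
    have := Nat.le_floor (by exact_mod_cast hpq : ((p.natAbs : ℕ) : ℝ) ≤ (M + 1) * q)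
    rw [Finset.mem_Icc]
    omega
  have hcard : ((Finset.Icc (-N : ℤ) N).card : ℝ) ≤ (2 * M + 3) * q := by
    have hN : (N : ℝ) ≤ (M + 1) * q := Nat.floor_le (by positivity)
    have hq1 : (1 : ℝ) ≤ q := by exact_mod_cast hq
    rw [Int.card_Icc, show ((N : ℤ) + 1 - -N).toNat = 2 * N + 1 by omega]
    push_cast
    linarith
  calc volume (Icc (-M) M ∩ fractionNhds r q)
      ≤ ∑ p ∈ Finset.Icc (-N : ℤ) N, volume (Metric.ball ((p : ℝ) / q) r) :=
        (measure_mono hcover).trans (measure_biUnion_finset_le _ _)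
    _ = ((Finset.Icc (-N : ℤ) N).card : ℝ≥0∞) * ENNReal.ofReal (2 * r) := by
        simp only [Real.volume_ball, Finset.sum_const, nsmul_eq_mul]
    _ ≤ ENNReal.ofReal ((2 * M + 3) * q) * ENNReal.ofReal (2 * r) := by
        gcongr
        rw [← ENNReal.ofReal_natCast]
        exact ENNReal.ofReal_le_ofReal hcard
    _ = ENNReal.ofReal ((2 * M + 3) * (2 * (q * r))) := by
        rw [← ENNReal.ofReal_mul (by positivity)]
        ring_nf

lemma volume_Icc_inter_iUnion_fractionNhds_le {M Q B : ℝ} {r : ℕ → ℝ} (hM : 0 ≤ M) (hQ : 0 ≤ Q)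
    (hr : ∀ q : ℕ, 0 < q → q ≤ Q → r q ≤ 1 ∧ q * r q ≤ B) :
    volume (Icc (-M) M ∩ {y | ∃ q : ℕ, 0 < q ∧ q ≤ Q ∧ y ∈ fractionNhds (r q) q}) ≤
      ENNReal.ofReal ((2 * M + 3) * (2 * B) * Q) := by
  have hcover : Icc (-M) M ∩ {y | ∃ q : ℕ, 0 < q ∧ q ≤ Q ∧ y ∈ fractionNhds (r q) q} ⊆
      ⋃ q ∈ Finset.Icc 1 ⌊Q⌋₊, Icc (-M) M ∩ fractionNhds (r q) q := by
    rintro y ⟨hyM, q, hq, hqQ, hy⟩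
    exact mem_iUnion₂.2 ⟨q, Finset.mem_Icc.2 ⟨hq, Nat.le_floor hqQ⟩, hyM, hy⟩
  calc volume (Icc (-M) M ∩ {y | ∃ q : ℕ, 0 < q ∧ q ≤ Q ∧ y ∈ fractionNhds (r q) q})
      ≤ ∑ q ∈ Finset.Icc 1 ⌊Q⌋₊, volume (Icc (-M) M ∩ fractionNhds (r q) q) :=
        (measure_mono hcover).trans (measure_biUnion_finset_le _ _)
    _ ≤ ∑ _q ∈ Finset.Icc 1 ⌊Q⌋₊, ENNReal.ofReal ((2 * M + 3) * (2 * B)) := by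
        refine Finset.sum_le_sum fun q hq => ?_
        obtain ⟨hq1, hqQ⟩ := Finset.mem_Icc.1 hq
        obtain ⟨hr1, hrB⟩ := hr q hq1 ((Nat.le_floor_iff hQ).1 hqQ)
        exact (volume_Icc_inter_fractionNhds_le hM hq1 hr1).trans (by gcongr)
    _ = ENNReal.ofReal ((2 * M + 3) * (2 * B)) * ENNReal.ofReal ⌊Q⌋₊ := by
        rw [Finset.sum_const, Nat.card_Icc, add_tsub_cancel_right, nsmul_eq_mul, mul_comm,
          ENNReal.ofReal_natCast]
    _ ≤ ENNReal.ofReal ((2 * M + 3) * (2 * B) * Q) := by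
        rw [← ENNReal.ofReal_mul' (Nat.cast_nonneg _)]
        rcases le_total 0 B with hB | hB
        · gcongr
          exact Nat.floor_le hQ
        · rw [ENNReal.ofReal_of_nonpos]
          · exact zero_le
          · exact mul_nonpos_of_nonpos_of_nonneg
              (mul_nonpos_of_nonneg_of_nonpos (by linarith) (by linarith)) (Nat.cast_nonneg _)

lemma volume_Icc_inter_logDenom_le_le {M δ : ℝ} (hM : 0 ≤ M) (hδ : 0 < δ) (hδ1 : δ ≤ 1) (t : ℝ) :
    volume (Icc (-M) M ∩ {y | logDenom δ y ≤ t}) ≤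
      ENNReal.ofReal ((2 * M + 3) * Real.exp (2 * t)) := by
  set Q := Real.exp t / √δ
  have hQ : δ * Q ^ 2 = Real.exp (2 * t) := by
    rw [div_pow, Real.sq_sqrt hδ.le, ← Real.exp_nat_mul, mul_div_cancel₀ _ hδ.ne', Nat.cast_ofNat]
  calc volume (Icc (-M) M ∩ {y | logDenom δ y ≤ t})
      ≤ volume (Icc (-M) M ∩ {y | ∃ q : ℕ, 0 < q ∧ q ≤ Q ∧ y ∈ fractionNhds (δ / 2) q}) :=
        measure_mono <| inter_subset_inter_right _ fun y hy =>
          ⟨qmin y δ, (qmin_spec hδ y).1, (logDenom_le_iff hδ).1 hy, (qmin_spec hδ y).2⟩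
    _ ≤ ENNReal.ofReal ((2 * M + 3) * (2 * (Q * (δ / 2))) * Q) :=
        volume_Icc_inter_iUnion_fractionNhds_le hM (by positivity) fun q _ hqQ =>
          ⟨by linarith, by gcongr⟩
    _ = ENNReal.ofReal ((2 * M + 3) * Real.exp (2 * t)) := by
        rw [← hQ]
        ring_nf

lemma exists_mem_fractionNhds_of_lt_qmin {δ y Q : ℝ} (hδ : 0 < δ) (hQ : 1 ≤ Q)
    (hy : Q < qmin y δ) :
    ∃ q : ℕ, 0 < q ∧ q ≤ 2 / (δ * Q) ∧ y ∈ fractionNhds (1 / (q * Q)) q := by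
  obtain ⟨p, q, hq, hqn, hpq⟩ := Real.exists_int_int_abs_mul_sub_le y (Nat.floor_pos.2 hQ)
  lift q to ℕ using hq.le
  have hq0 : 0 < q := by exact_mod_cast hq
  have hqQ : (q : ℝ) ≤ Q := (Nat.cast_le.2 (Int.ofNat_le.1 hqn)).trans (Nat.floor_le (by linarith))
  have hclose : |y - p / q| < 1 / (q * Q) := by
    have : |y - p / q| * q < 1 / Q :=
      calc |y - p / q| * q = |q * y - p| := by
            rw [← Nat.abs_cast q, ← abs_mul, Nat.abs_cast]
            congr 1
            field_simp
        _ ≤ 1 / (⌊Q⌋₊ + 1) := by exact_mod_cast hpq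
        _ < 1 / Q := by
            gcongr
            exact Nat.lt_floor_add_one Q
    rwa [← lt_div_iff₀ (by positivity), div_div, mul_comm Q] at this
  have hfar : δ / 2 ≤ |y - p / q| := by
    by_contra! h
    have := qmin_le hq0 (mem_fractionNhds.2 ⟨p, h⟩)
    have : (qmin y δ : ℝ) ≤ q := by exact_mod_cast this
    linarith
  refine ⟨q, hq0, ?_, mem_fractionNhds.2 ⟨p, hclose⟩⟩
  have := hfar.trans hclose.le
  rw [div_le_div_iff₀ (by norm_num) (by positivity)] at this
  rw [le_div_iff₀ (by positivity)]
  linarith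

lemma volume_Icc_inter_lt_logDenom_le {M δ : ℝ} (hM : 0 ≤ M) (hδ : 0 < δ) (hδ1 : δ ≤ 1) (t : ℝ) :
    volume (Icc (-M) M ∩ {y | t < logDenom δ y}) ≤
      ENNReal.ofReal (4 * (2 * M + 3) * Real.exp (-2 * t)) := by
  set Q := Real.exp t / √δ
  have hQ : 1 / (δ * Q ^ 2) = Real.exp (-2 * t) := by
    rw [div_pow, Real.sq_sqrt hδ.le, ← Real.exp_nat_mul, mul_div_cancel₀ _ hδ.ne', Nat.cast_ofNat,
      one_div, ← Real.exp_neg, neg_mul]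
  rcases le_or_gt 1 Q with hQ1 | hQ1
  · calc volume (Icc (-M) M ∩ {y | t < logDenom δ y})
        ≤ volume (Icc (-M) M ∩
            {y | ∃ q : ℕ, 0 < q ∧ q ≤ 2 / (δ * Q) ∧ y ∈ fractionNhds (1 / (q * Q)) q}) :=
          measure_mono <| inter_subset_inter_right _ fun y hy =>
            exists_mem_fractionNhds_of_lt_qmin hδ hQ1 ((lt_logDenom_iff hδ).1 hy)
      _ ≤ ENNReal.ofReal ((2 * M + 3) * (2 * (1 / Q)) * (2 / (δ * Q))) := by
          refine volume_Icc_inter_iUnion_fractionNhds_le hM (by positivity) fun q hq _ => ⟨?_, ?_⟩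
          · have : (1 : ℝ) ≤ q := by exact_mod_cast hq
            exact (div_le_one (by positivity)).2 (one_le_mul_of_one_le_of_one_le this hQ1)
          · exact le_of_eq (by field_simp)
      _ = ENNReal.ofReal (4 * (2 * M + 3) * Real.exp (-2 * t)) := by
          rw [← hQ]
          congr 1
          field_simp
          ring
  · have ht : 1 ≤ Real.exp (-2 * t) := by
      rw [← hQ, one_le_div (by positivity)]
      exact mul_le_one₀ hδ1 (by positivity) (pow_le_one₀ (by positivity) hQ1.le)
    calc volume (Icc (-M) M ∩ {y | t < logDenom δ y})
        ≤ ENNReal.ofReal (M - -M) := (measure_mono inter_subset_left).trans_eq Real.volume_Icc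
      _ ≤ ENNReal.ofReal (4 * (2 * M + 3) * Real.exp (-2 * t)) := by
          gcongr
          nlinarith

lemma volume_Icc_inter_lt_abs_logDenom_le {M δ : ℝ} (hM : 0 ≤ M) (hδ : 0 < δ) (hδ1 : δ ≤ 1)
    (t : ℝ) :
    volume (Icc (-M) M ∩ {y | t < |logDenom δ y|}) ≤
      ENNReal.ofReal (5 * (2 * M + 3) * Real.exp (-2 * t)) := by
  have hsplit : {y | t < |logDenom δ y|} ⊆ {y | t < logDenom δ y} ∪ {y | logDenom δ y ≤ -t} :=
    fun y (hy : t < _) => (lt_abs.1 hy).imp id fun h => (show logDenom δ y ≤ -t by linarith)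
  calc volume (Icc (-M) M ∩ {y | t < |logDenom δ y|})
      ≤ volume (Icc (-M) M ∩ {y | t < logDenom δ y}) +
          volume (Icc (-M) M ∩ {y | logDenom δ y ≤ -t}) := by
        exact (measure_mono (inter_subset_inter_right _ hsplit)).trans
          (by rw [inter_union_distrib_left]; exact measure_union_le _ _)
    _ ≤ ENNReal.ofReal (4 * (2 * M + 3) * Real.exp (-2 * t)) +
          ENNReal.ofReal ((2 * M + 3) * Real.exp (2 * -t)) :=
        add_le_add (volume_Icc_inter_lt_logDenom_le hM hδ hδ1 t)
          (volume_Icc_inter_logDenom_le_le hM hδ hδ1 (-t))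
    _ = ENNReal.ofReal (5 * (2 * M + 3) * Real.exp (-2 * t)) := by
        rw [← ENNReal.ofReal_add (by positivity) (by positivity), mul_neg, neg_mul]
        ring_nf

end Tails

section FareyMediants

/-- The length of the set of points, in units of the length `δ` of the window, at which the mediant
of two Farey neighbours with denominators `u / √δ` and `v / √δ` has the smallest denominator. -/
noncomputable def mediantWeight (u v : ℝ) : ℝ :=
  max 0 ((max 1 ((u + v) * u))⁻¹ + (max 1 ((u + v) * v))⁻¹ - 1)

/-- The points closer than `δ / 2` to the mediant of `a / m < b / n`, but to neither of these. -/
def mediantSet (δ : ℝ) (a b : ℤ) (m n : ℕ) : Set ℝ :=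
  Ioo ((a + b : ℝ) / (m + n) - δ / 2) ((a + b : ℝ) / (m + n) + δ / 2) ∩
    Icc (a / m + δ / 2 : ℝ) (b / n - δ / 2)

lemma measurableSet_mediantSet (δ : ℝ) (a b : ℤ) (m n : ℕ) :
    MeasurableSet (mediantSet δ a b m n) := measurableSet_Ioo.inter measurableSet_Icc

lemma volume_Ioo_inter_Icc (c δ L M : ℝ) :
    volume (Ioo (c - δ / 2) (c + δ / 2) ∩ Icc (c - L + δ / 2) (c + M - δ / 2)) =
      ENNReal.ofReal (min δ L + min δ M - δ) := by
  have hsup : max (c - δ / 2) (c - L + δ / 2) = c + δ / 2 - min δ L := by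
    rcases le_total δ L with h | h
    · rw [min_eq_left h, max_eq_left] <;> linarith
    · rw [min_eq_right h, max_eq_right] <;> linarith
  have hinf : min (c + δ / 2) (c + M - δ / 2) = c - δ / 2 + min δ M := by
    rcases le_total δ M with h | h
    · rw [min_eq_left h, min_eq_left] <;> linarith
    · rw [min_eq_right h, min_eq_right] <;> linarith
  rw [measure_congr ((Ioo_ae_eq_Icc (a := c - δ / 2) (b := c + δ / 2)).inter
    (ae_eq_refl (Icc (c - L + δ / 2) (c + M - δ / 2)))), Icc_inter_Icc, Real.volume_Icc]
  change ENNReal.ofReal (min _ _ - max _ _) = _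
  rw [hsup, hinf]
  congr 1
  ring

variable {δ y : ℝ} {a b : ℤ} {m n : ℕ}

lemma volume_mediantSet (hm : 0 < m) (hn : 0 < n) (hdet : b * m - a * n = 1) (hδ : 0 < δ) :
    volume (mediantSet δ a b m n) = ENNReal.ofReal (δ * mediantWeight (m * √δ) (n * √δ)) := by
  have hdet' : (b : ℝ) * m - a * n = 1 := by exact_mod_cast hdet
  have hleft : (a : ℝ) / m = (a + b : ℝ) / (m + n) - 1 / ((m + n) * m) := by
    field_simp
    linear_combination -hdet'
  have hright : (b : ℝ) / n = (a + b : ℝ) / (m + n) + 1 / ((m + n) * n) := by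
    field_simp
    linear_combination hdet'
  have scale {k : ℕ} (hk : 0 < k) :
      δ * (max 1 ((m * √δ + n * √δ) * (k * √δ)))⁻¹ = min δ (1 / ((m + n) * k)) := by
    have hK : 0 < ((m : ℝ) + n) * k := by positivity
    rw [← add_mul, mul_mul_mul_comm, Real.mul_self_sqrt hδ.le]
    rcases le_total 1 (((m : ℝ) + n) * k * δ) with h | h
    · rw [max_eq_right h, min_eq_right ((div_le_iff₀' hK).2 h)]
      field_simp
    · rw [max_eq_left h, min_eq_left ((le_div_iff₀' hK).2 h), inv_one, mul_one]
  rw [mediantSet, hleft, hright, volume_Ioo_inter_Icc, mediantWeight, mul_max_of_nonneg _ _ hδ.le,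
    mul_zero, mul_sub, mul_add, scale hm, scale hn, mul_one, ENNReal.ofReal_max,
    ENNReal.ofReal_zero]
  exact (max_eq_right zero_le).symm

lemma add_le_of_div_lt_div_of_div_lt_div {c k : ℤ} (hm : 0 < m) (hn : 0 < n) (hk : 0 < k)
    (hdet : b * m - a * n = 1) (hac : (a / m : ℝ) < c / k) (hcb : (c / k : ℝ) < b / n) :
    (m + n : ℤ) ≤ k ∧ ((m + n : ℤ) = k → c = a + b) := by
  rw [div_lt_div_iff₀ (by positivity) (by exact_mod_cast hk)] at hac
  rw [div_lt_div_iff₀ (by exact_mod_cast hk) (by positivity)] at hcb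
  have hA : 1 ≤ c * m - a * k := by
    have : a * k < c * m := by exact_mod_cast hac
    omega
  have hB : 1 ≤ b * k - c * n := by
    have : c * n < b * k := by exact_mod_cast hcb
    omega
  have hk_eq : k = m * (b * k - c * n) + n * (c * m - a * k) := by linear_combination -k * hdet
  have hm' : (0 : ℤ) < m := by exact_mod_cast hm
  have : (0 : ℤ) < n := by exact_mod_cast hn
  refine ⟨by nlinarith, fun h => ?_⟩
  have hA1 : c * m - a * k = 1 := by nlinarith
  exact mul_right_cancel₀ hm'.ne' (by linear_combination hA1 - hdet - a * h)

lemma mem_mediantSet_iff (hm : 0 < m) (hn : 0 < n) (hdet : b * m - a * n = 1) :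
    y ∈ mediantSet δ a b m n ↔ |y - ((a + b : ℤ) : ℝ) / (m + n : ℕ)| < δ / 2 ∧
      ∀ k : ℕ, 0 < k → k < m + n → y ∉ fractionNhds (δ / 2) k := by
  have hdet' : (b : ℝ) * m - a * n = 1 := by exact_mod_cast hdet
  have hlo : (a / m : ℝ) < (a + b) / (m + n) := by
    rw [div_lt_div_iff₀ (by positivity) (by positivity)]
    linarith
  have hhi : ((a + b) / (m + n) : ℝ) < b / n := by
    rw [div_lt_div_iff₀ (by positivity) (by positivity)]
    linarith
  rw [mediantSet, mem_inter_iff, ← Real.ball_eq_Ioo, Metric.mem_ball, Real.dist_eq]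
  push_cast
  refine and_congr_right fun hy => ⟨fun ⟨hya, hyb⟩ k hk hlt hmem => ?_, fun h => ⟨?_, ?_⟩⟩
  · obtain ⟨c, hc⟩ := mem_fractionNhds.1 hmem
    rw [abs_lt] at hc
    have hk' : (0 : ℤ) < k := by exact_mod_cast hk
    have := (add_le_of_div_lt_div_of_div_lt_div (c := c) hm hn hk' hdet
      (by push_cast; linarith) (by push_cast; linarith)).1
    omega
  · by_contra! hya
    refine h m hm (by omega) (mem_fractionNhds.2 ⟨a, ?_⟩)
    rw [abs_lt] at hy ⊢
    constructor <;> linarith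
  · by_contra! hyb
    refine h n hn (by omega) (mem_fractionNhds.2 ⟨b, ?_⟩)
    rw [abs_lt] at hy ⊢
    constructor <;> linarith

lemma qmin_eq_of_mem_mediantSet (hδ : 0 < δ) (hm : 0 < m) (hn : 0 < n) (hdet : b * m - a * n = 1)
    (hy : y ∈ mediantSet δ a b m n) : qmin y δ = m + n := by
  obtain ⟨hnear, hmin⟩ := (mem_mediantSet_iff hm hn hdet).1 hy
  exact (qmin_eq_iff hδ).2 ⟨⟨by omega, mem_fractionNhds.2 ⟨_, hnear⟩⟩, hmin⟩

lemma eq_of_mem_mediantSet_of_mem_mediantSet {a' b' : ℤ} {m' n' : ℕ} (hδ : 0 < δ)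
    (hm : 0 < m) (hn : 0 < n) (hdet : b * m - a * n = 1) (hy : y ∈ mediantSet δ a b m n)
    (hm' : 0 < m') (hn' : 0 < n') (hdet' : b' * m' - a' * n' = 1)
    (hy' : y ∈ mediantSet δ a' b' m' n') : m = m' ∧ n = n' := by
  have hsum : m + n = m' + n' := by
    rw [← qmin_eq_of_mem_mediantSet hδ hm hn hdet hy,
      qmin_eq_of_mem_mediantSet hδ hm' hn' hdet' hy']
  have hnum : a' + b' = a + b := by
    have hnear := abs_lt.1 ((mem_mediantSet_iff hm' hn' hdet').1 hy').1
    obtain ⟨-, hya, hyb⟩ := hy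
    refine (add_le_of_div_lt_div_of_div_lt_div (c := a' + b') (k := (m' + n' : ℕ)) hm hn
      (by omega) hdet ?_ ?_).2 (by omega) <;> rw [Int.cast_natCast] <;> linarith
  have hdvd : ((m + n : ℕ) : ℤ) ∣ m - m' := by
    have hcop : IsCoprime ((m + n : ℕ) : ℤ) (a + b) :=
      ⟨-a, m, by push_cast; linear_combination hdet⟩
    refine hcop.dvd_of_dvd_mul_left ⟨a - a', ?_⟩
    have hsum' : (m + n : ℤ) = m' + n' := by exact_mod_cast hsum
    push_cast
    linear_combination hdet - hdet' + m' * hnum + a' * hsum'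
  have hzero := Int.eq_zero_of_abs_lt_dvd hdvd (by rw [abs_lt]; constructor <;> push_cast <;> omega)
  omega

lemma exists_rat_den_eq_qmin (hδ : 0 < δ) (y : ℝ) :
    ∃ r : ℚ, r.den = qmin y δ ∧ |y - r| < δ / 2 := by
  obtain ⟨hq, hmem⟩ := qmin_spec hδ y
  obtain ⟨p, hp⟩ := mem_fractionNhds.1 hmem
  set q := qmin y δ
  have hr : |y - ((p / q : ℚ) : ℝ)| < δ / 2 := by exact_mod_cast hp
  refine ⟨p / q, ((Nat.le_of_dvd hq ?_).antisymm (qmin_le (Rat.den_pos _) ?_)), hr⟩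
  · have := Rat.den_dvd p q
    rw [Rat.divInt_eq_div] at this
    exact_mod_cast this
  · exact mem_fractionNhds.2 ⟨_, by rwa [← Rat.cast_def]⟩

lemma exists_det_eq_one_mem_Ico {a c : ℤ} (hac : IsCoprime a c) (hc : 0 < c) (N : ℤ) :
    ∃ b d, a * d - b * c = 1 ∧ d ∈ Ico (N * c) ((N + 1) * c) := by
  obtain ⟨u, v, huv⟩ := hac
  have hmod := Int.emod_add_mul_ediv u c
  refine ⟨-v + a * (N - u / c), N * c + u % c, by linear_combination huv + a * hmod, ?_, ?_⟩
  · linarith [Int.emod_nonneg u hc.ne']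
  · linarith [Int.emod_lt_of_pos u hc]

lemma exists_lt_mul_sub_mul_eq_one {k : ℤ} (hm : 0 < m) (hkm : IsCoprime k m) :
    ∃ n : ℕ, n < m ∧ ∃ b : ℤ, b * m - n * k = 1 := by
  obtain ⟨b, d, hdet, hd0, hdm⟩ :=
    exists_det_eq_one_mem_Ico hkm.neg_left (Int.natCast_pos.2 hm) 0
  rw [zero_mul] at hd0
  rw [zero_add, one_mul] at hdm
  lift d to ℕ using hd0
  exact ⟨d, Int.ofNat_lt.1 hdm, -b, by linear_combination hdet⟩

lemma exists_mem_mediantSet (hδ : 0 < δ) (hq : 2 ≤ qmin y δ) :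
    ∃ (m n : ℕ) (a b : ℤ), 0 < m ∧ 0 < n ∧ b * m - a * n = 1 ∧ y ∈ mediantSet δ a b m n := by
  obtain ⟨r, hden, hr⟩ := exists_rat_den_eq_qmin hδ y
  obtain ⟨n, hn, b, hb⟩ := exists_lt_mul_sub_mul_eq_one r.den_pos r.isCoprime_num_den
  have hn0 : 0 < n := by
    rw [Nat.pos_iff_ne_zero]
    rintro rfl
    have := Int.isUnit_iff.1 (IsUnit.of_mul_eq_one_right b (by simpa using hb))
    omega
  have hsum : r.den - n + n = r.den := by omega
  have hdet : b * (r.den - n : ℕ) - (r.num - b) * n = 1 := by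
    push_cast [Nat.cast_sub hn.le]
    linear_combination hb
  refine ⟨r.den - n, n, r.num - b, b, by omega, hn0, hdet, ?_⟩
  rw [mem_mediantSet_iff (by omega) hn0 hdet, hsum, sub_add_cancel, ← Rat.cast_def, hden]
  exact ⟨hr, ((qmin_eq_iff hδ).1 rfl).2⟩

end FareyMediants

section MediantPoints

/-- The points of `[0, 1]` whose smallest denominator is realised by the mediant of two Farey
neighbours with denominators `z.1` and `z.2`. -/
def mediantPoints (δ : ℝ) (z : ℕ × ℕ) : Set ℝ :=
  {y ∈ Icc (0 : ℝ) 1 | 0 < z.1 ∧ 0 < z.2 ∧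
    ∃ a b : ℤ, b * z.1 - a * z.2 = 1 ∧ y ∈ mediantSet δ a b z.1 z.2}

variable {δ : ℝ}

lemma mediantSet_subset_Icc {m n : ℕ} {a b : ℤ} (hδ : 0 < δ) (hm : 0 < m) (hn : 0 < n)
    (hdet : b * m - a * n = 1) (ha : 0 ≤ a) (ham : a < m) : mediantSet δ a b m n ⊆ Icc 0 1 := by
  rintro y ⟨-, hya, hyb⟩
  have hbn : b ≤ n := le_of_mul_le_mul_right (by nlinarith) (by exact_mod_cast hm : (0 : ℤ) < m)
  have : (0 : ℝ) ≤ a / m := by positivity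
  have : (b / n : ℝ) ≤ 1 := div_le_one_of_le₀ (by exact_mod_cast hbn) (by positivity)
  constructor <;> linarith

lemma mem_Ico_of_mem_mediantSet {m n : ℕ} {a b : ℤ} {y : ℝ} (hδ : 0 < δ) (hm : 0 < m) (hn : 0 < n)
    (hdet : b * m - a * n = 1) (hy : y ∈ mediantSet δ a b m n) (hy01 : y ∈ Icc 0 1) :
    a ∈ Ico (0 : ℤ) m := by
  obtain ⟨-, hya, hyb⟩ := hy
  have not_between (c : ℤ) (hac : (a / m : ℝ) < c) (hcb : (c : ℝ) < b / n) : False := by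
    have := (add_le_of_div_lt_div_of_div_lt_div (c := c) (k := 1) hm hn one_pos hdet
      (by simpa using hac) (by simpa using hcb)).1
    omega
  constructor
  · by_contra! ha
    refine not_between 0 ?_ ?_
    · rw [Int.cast_zero]
      exact div_neg_of_neg_of_pos (Int.cast_lt_zero.2 ha) (by positivity)
    · push_cast
      linarith [hy01.1]
  · have hb : b ≤ n := by
      by_contra! hb
      refine not_between 1 ?_ ?_
      · push_cast
        linarith [hy01.2]
      · rw [Int.cast_one, one_lt_div (by positivity)]
        exact_mod_cast hb
    have : (0 : ℤ) < n := by exact_mod_cast hn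
    exact lt_of_mul_lt_mul_right (by nlinarith) this.le

lemma exists_mediantPoints_eq {z : ℕ × ℕ} (hδ : 0 < δ) (hm : 0 < z.1) (hn : 0 < z.2)
    (hz : z.1.Coprime z.2) :
    ∃ a b : ℤ, b * z.1 - a * z.2 = 1 ∧ mediantPoints δ z = mediantSet δ a b z.1 z.2 := by
  obtain ⟨m, n⟩ := z
  obtain ⟨a, ham, b, hdet⟩ :=
    exists_lt_mul_sub_mul_eq_one hm (Nat.isCoprime_iff_coprime.2 hz.symm)
  refine ⟨a, b, hdet, Subset.antisymm ?_ fun y hy => ⟨?_, hm, hn, a, b, hdet, hy⟩⟩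
  · rintro y ⟨hy01, -, -, a', b', hdet', hy⟩
    obtain ⟨ha', ham'⟩ := mem_Ico_of_mem_mediantSet hδ hm hn hdet' hy hy01
    have hdvd : (m : ℤ) ∣ a' - a :=
      (Nat.isCoprime_iff_coprime.2 hz).dvd_of_dvd_mul_right
        ⟨b' - b, by linear_combination hdet - hdet'⟩
    have ha : a' = a := sub_eq_zero.1 <| Int.eq_zero_of_abs_lt_dvd hdvd (by
      rw [abs_lt]; constructor <;> omega)
    have hb : b' = b := mul_right_cancel₀ (by exact_mod_cast hm.ne' : (m : ℤ) ≠ 0)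
      (by linear_combination hdet' - hdet + n * ha)
    rwa [ha, hb] at hy
  · exact mediantSet_subset_Icc hδ hm hn hdet (Int.natCast_nonneg a) (by exact_mod_cast ham) hy

lemma mediantPoints_eq_empty {z : ℕ × ℕ} (hz : ¬ (0 < z.1 ∧ 0 < z.2 ∧ z.1.Coprime z.2)) :
    mediantPoints δ z = ∅ := by
  refine eq_empty_of_forall_notMem fun y ⟨_, hm, hn, a, b, hdet, _⟩ => hz ⟨hm, hn, ?_⟩
  exact Nat.isCoprime_iff_coprime.1 ⟨b, -a, by linear_combination hdet⟩

lemma measurableSet_mediantPoints (hδ : 0 < δ) (z : ℕ × ℕ) :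
    MeasurableSet (mediantPoints δ z) := by
  by_cases hz : 0 < z.1 ∧ 0 < z.2 ∧ z.1.Coprime z.2
  · obtain ⟨a, b, -, h⟩ := exists_mediantPoints_eq hδ hz.1 hz.2.1 hz.2.2
    rw [h]
    exact measurableSet_mediantSet δ a b _ _
  · rw [mediantPoints_eq_empty hz]
    exact MeasurableSet.empty

lemma volume_mediantPoints (hδ : 0 < δ) (z : ℕ × ℕ) :
    volume (mediantPoints δ z) =
      if 0 < z.1 ∧ 0 < z.2 ∧ z.1.Coprime z.2 then
        ENNReal.ofReal (δ * mediantWeight (z.1 * √δ) (z.2 * √δ)) else 0 := by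
  split_ifs with hz
  · obtain ⟨a, b, hdet, h⟩ := exists_mediantPoints_eq hδ hz.1 hz.2.1 hz.2.2
    rw [h, volume_mediantSet hz.1 hz.2.1 hdet hδ]
  · rw [mediantPoints_eq_empty hz, measure_empty]

lemma pairwise_disjoint_mediantPoints (hδ : 0 < δ) :
    Pairwise (Function.onFun Disjoint (mediantPoints δ)) := by
  intro z z' hne
  rw [Function.onFun, Set.disjoint_left]
  rintro y ⟨-, hm, hn, a, b, hdet, hy⟩ ⟨-, hm', hn', a', b', hdet', hy'⟩
  obtain ⟨h1, h2⟩ := eq_of_mem_mediantSet_of_mem_mediantSet hδ hm hn hdet hy hm' hn' hdet' hy'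
  exact hne (Prod.ext h1 h2)

lemma Icc_inter_qmin_mem_eq_iUnion (hδ : 0 < δ) {S : Set ℕ} (hS : ∀ q ∈ S, 2 ≤ q) :
    Icc 0 1 ∩ {y | qmin y δ ∈ S} =
      ⋃ z : ℕ × ℕ, {y ∈ mediantPoints δ z | z.1 + z.2 ∈ S} := by
  ext y
  simp only [mem_inter_iff, mem_iUnion, mem_ofPred_eq]
  constructor
  · rintro ⟨hy, hq⟩
    obtain ⟨m, n, a, b, hm, hn, hdet, hmem⟩ := exists_mem_mediantSet hδ (hS _ hq)
    refine ⟨(m, n), ⟨hy, hm, hn, a, b, hdet, hmem⟩, ?_⟩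
    rwa [qmin_eq_of_mem_mediantSet hδ hm hn hdet hmem] at hq
  · rintro ⟨z, ⟨hy, hm, hn, a, b, hdet, hmem⟩, hz⟩
    exact ⟨hy, by rwa [qmin_eq_of_mem_mediantSet hδ hm hn hdet hmem]⟩

open Classical in
lemma volume_Icc_inter_qmin_mem (hδ : 0 < δ) {S : Set ℕ} (hS : ∀ q ∈ S, 2 ≤ q) :
    volume (Icc 0 1 ∩ {y | qmin y δ ∈ S}) =
      ∑' z : ℕ × ℕ, if (0 < z.1 ∧ 0 < z.2 ∧ z.1.Coprime z.2) ∧ z.1 + z.2 ∈ S then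
        ENNReal.ofReal (δ * mediantWeight (z.1 * √δ) (z.2 * √δ)) else 0 := by
  rw [Icc_inter_qmin_mem_eq_iUnion hδ hS, measure_iUnion]
  · refine tsum_congr fun z => ?_
    by_cases hz : z.1 + z.2 ∈ S
    · simp only [hz, and_true]
      exact volume_mediantPoints hδ z
    · simp only [hz, and_false, if_false]
      exact measure_empty
  · exact fun z z' hne =>
      (pairwise_disjoint_mediantPoints hδ hne).mono (sep_subset _ _) (sep_subset _ _)
  · exact fun z => (measurableSet_mediantPoints hδ z).inter (MeasurableSet.const _)

end MediantPoints

section PrimitiveRiemannSum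

open ArithmeticFunction in
lemma tsum_moebius_div_sq : ∑' d : ℕ, (moebius d : ℝ) / d ^ 2 = 6 / Real.pi ^ 2 := by
  have hζ := LSeries_zeta_mul_Lseries_moebius (s := 2) (by norm_num)
  rw [LSeries_zeta_eq_riemannZeta (by norm_num), riemannZeta_two] at hζ
  have hL : LSeries (fun n => ((moebius n : ℤ) : ℂ)) 2 =
      ((∑' d : ℕ, (moebius d : ℝ) / d ^ 2 : ℝ) : ℂ) := by
    rw [LSeries, Complex.ofReal_tsum]
    refine tsum_congr fun n => ?_
    rw [LSeries.term_def]
    split_ifs with hn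
    · simp only [hn, ArithmeticFunction.map_zero, Int.cast_zero, zero_div, Complex.ofReal_zero]
    · push_cast
      rw [Complex.cpow_ofNat]
  rw [hL] at hζ
  have hπ : (Real.pi : ℂ) ≠ 0 := by exact_mod_cast Real.pi_ne_zero
  rw [← Complex.ofReal_inj]
  push_cast at hζ ⊢
  field_simp at hζ ⊢
  linear_combination hζ

open ArithmeticFunction in
lemma sum_divisors_moebius (n : ℕ) :
    ∑ d ∈ n.divisors, (moebius d : ℝ) = if n = 1 then 1 else 0 := by
  have h := congrArg (fun f : ArithmeticFunction ℤ => f n) moebius_mul_coe_zeta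
  simp only [coe_mul_zeta_apply, one_apply] at h
  exact_mod_cast h

lemma tsum_ite_dvd_gcd {d : ℕ} (hd : d ≠ 0) (g : ℤ × ℤ → ℝ) :
    ∑' z : ℤ × ℤ, (if d ∣ z.1.gcd z.2 then g z else 0) = ∑' z : ℤ × ℤ, g ((d : ℤ) • z) := by
  have hd' : (d : ℤ) ≠ 0 := Int.natCast_ne_zero.2 hd
  rw [← (smul_right_injective (ℤ × ℤ) hd').tsum_eq]
  · exact tsum_congr fun z => if_pos (Int.dvd_gcd (Dvd.intro _ rfl) (Dvd.intro _ rfl))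
  · intro z hz
    have hdvd : (d : ℤ) ∣ z.1.gcd z.2 := Int.natCast_dvd_natCast.2 <| by
      by_contra h
      exact hz (if_neg h)
    obtain ⟨x, hx⟩ := hdvd.trans (Int.gcd_dvd_left (a := z.1) (b := z.2))
    obtain ⟨y, hy⟩ := hdvd.trans (Int.gcd_dvd_right (a := z.1) (b := z.2))
    exact ⟨(x, y), Prod.ext hx.symm hy.symm⟩

lemma tsum_coprime_eq_tsum_moebius {g : ℤ × ℤ → ℝ} (hg : g.support.Finite) (h0 : g 0 = 0) :
    ∑' z : ℤ × ℤ, (if z.1.gcd z.2 = 1 then g z else 0) =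
      ∑' d : ℕ, (ArithmeticFunction.moebius d : ℝ) * ∑' z : ℤ × ℤ, g ((d : ℤ) • z) := by
  set c : ℕ → ℤ × ℤ → ℝ := fun d z =>
    if d ∣ z.1.gcd z.2 then (ArithmeticFunction.moebius d : ℝ) * g z else 0
  have gcd_ne_zero {z : ℤ × ℤ} (hz : g z ≠ 0) : z.1.gcd z.2 ≠ 0 := fun h => by
    rw [Int.gcd_eq_zero_iff] at h
    exact hz (by rwa [show z = 0 from Prod.ext h.1 h.2])
  have sum_d (z : ℤ × ℤ) : ∑' d, c d z = if z.1.gcd z.2 = 1 then g z else 0 := by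
    by_cases hz : g z = 0
    · simp only [c, hz, mul_zero, ite_self, tsum_zero]
    · rw [tsum_eq_sum (s := (z.1.gcd z.2).divisors) fun d hd =>
          if_neg fun h => hd (Nat.mem_divisors.2 ⟨h, gcd_ne_zero hz⟩),
        Finset.sum_congr rfl fun d hd => if_pos (Nat.dvd_of_mem_divisors hd), ← Finset.sum_mul,
        sum_divisors_moebius, ite_mul, one_mul, zero_mul]
  have sum_z (d : ℕ) :
      ∑' z, c d z = ArithmeticFunction.moebius d * ∑' z : ℤ × ℤ, g ((d : ℤ) • z) := by
    rcases eq_or_ne d 0 with rfl | hd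
    · simp only [c, ArithmeticFunction.map_zero, Int.cast_zero, zero_mul, ite_self, tsum_zero]
    · rw [← tsum_ite_dvd_gcd hd, ← tsum_mul_left]
      simp only [c, mul_ite, mul_zero]
  have hsummable : Summable (Function.uncurry c) := by
    refine summable_of_hasFiniteSupport (Set.Finite.subset
      (hg.biUnion fun z _ => ((z.1.gcd z.2).divisors.finite_toSet.image fun d => (d, z))) ?_)
    rintro ⟨d, z⟩ hdz
    have hd : d ∣ z.1.gcd z.2 := by
      by_contra hd
      exact hdz (if_neg hd)
    have hz : g z ≠ 0 := fun hz => hdz (by simp only [Function.uncurry, c, hz, mul_zero, ite_self])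
    exact mem_biUnion hz ⟨d, Nat.mem_divisors.2 ⟨hd, gcd_ne_zero hz⟩, rfl⟩
  calc ∑' z : ℤ × ℤ, (if z.1.gcd z.2 = 1 then g z else 0) = ∑' z, ∑' d, c d z :=
        tsum_congr fun z => (sum_d z).symm
    _ = ∑' d, ∑' z, c d z := hsummable.tsum_comm
    _ = _ := tsum_congr sum_z

lemma volume_map_floor_prod :
    (volume : Measure (ℝ × ℝ)).map (Prod.map Int.floor Int.floor : ℝ × ℝ → ℤ × ℤ) =
      Measure.count := by
  refine Measure.ext_of_singleton fun z => ?_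
  rw [Measure.map_apply (by fun_prop) (measurableSet_singleton z), Measure.count_singleton]
  have : (Prod.map Int.floor Int.floor : ℝ × ℝ → ℤ × ℤ) ⁻¹' {z} =
      Ico (z.1 : ℝ) (z.1 + 1) ×ˢ Ico (z.2 : ℝ) (z.2 + 1) := by
    ext x
    simp only [mem_preimage, mem_singleton_iff, Prod.ext_iff, Prod.map_fst, Prod.map_snd,
      Int.floor_eq_iff, mem_prod, mem_Ico]
  rw [this, Measure.volume_eq_prod, Measure.prod_prod]
  simp only [Real.volume_Ico, add_sub_cancel_left, ENNReal.ofReal_one, mul_one]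

lemma integral_comp_floor_prod {f : ℤ × ℤ → ℝ} (hf : f.support.Finite) :
    ∫ x : ℝ × ℝ, f (⌊x.1⌋, ⌊x.2⌋) = ∑' z, f z := by
  have hint : Integrable f Measure.count :=
    integrable_count_iff.2 (summable_of_hasFiniteSupport hf).norm
  calc ∫ x : ℝ × ℝ, f (⌊x.1⌋, ⌊x.2⌋) = ∫ z, f z ∂Measure.count := by
        rw [← volume_map_floor_prod, integral_map (by fun_prop) (by fun_prop)]
        rfl
    _ = ∑' z, f z := by
        rw [integral_countable hint]
        simp only [Measure.real, Measure.count_singleton, ENNReal.toReal_one, one_smul]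

variable {h : ℝ × ℝ → ℝ} {B R ε : ℝ}

lemma finite_support_comp_mul (hsupp : h.support ⊆ Ioc 0 R ×ˢ Ioc 0 R) (hε : 0 < ε) :
    (Function.support fun z : ℤ × ℤ => h (ε * z.1, ε * z.2)).Finite := by
  refine ((finite_Icc (0 : ℤ) ⌊R / ε⌋).prod (finite_Icc (0 : ℤ) ⌊R / ε⌋)).subset fun z hz => ?_
  have mem_Icc_of {k : ℤ} (hk : ε * k ∈ Ioc 0 R) : k ∈ Icc 0 ⌊R / ε⌋ :=
    ⟨by exact_mod_cast (pos_of_mul_pos_right hk.1 hε.le).le,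
      Int.le_floor.2 ((le_div_iff₀' hε).2 hk.2)⟩
  exact ⟨mem_Icc_of (hsupp hz).1, mem_Icc_of (hsupp hz).2⟩

lemma sq_mul_tsum_eq_integral (hsupp : h.support ⊆ Ioc 0 R ×ˢ Ioc 0 R) (hε : 0 < ε) :
    ε ^ 2 * ∑' z : ℤ × ℤ, h (ε * z.1, ε * z.2) =
      ∫ x : ℝ × ℝ, h (ε * ⌊x.1 / ε⌋, ε * ⌊x.2 / ε⌋) := by
  have hscale := Measure.integral_comp_inv_smul_of_nonneg volume
    (fun x : ℝ × ℝ => h (ε * ⌊x.1⌋, ε * ⌊x.2⌋)) hε.le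
  rw [Module.finrank_prod, Module.finrank_self, smul_eq_mul,
    integral_comp_floor_prod (finite_support_comp_mul hsupp hε)] at hscale
  simpa only [Prod.smul_fst, Prod.smul_snd, smul_eq_mul, inv_mul_eq_div] using hscale.symm

lemma norm_comp_mul_floor_le (hsupp : h.support ⊆ Ioc 0 R ×ˢ Ioc 0 R) (hB : ∀ x, |h x| ≤ B)
    (hε : 0 < ε) (x : ℝ × ℝ) :
    ‖h (ε * ⌊x.1 / ε⌋, ε * ⌊x.2 / ε⌋)‖ ≤
      (Icc 0 (2 * R) ×ˢ Icc 0 (2 * R)).indicator (fun _ => B) x := by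
  have mem_of_floor {u : ℝ} (hu : ε * ⌊u / ε⌋ ∈ Ioc 0 R) : u ∈ Icc 0 (2 * R) := by
    have hfloor_pos : 0 < ⌊u / ε⌋ := Int.cast_pos.1 (pos_of_mul_pos_right hu.1 hε.le)
    have hfloor : (1 : ℝ) ≤ ⌊u / ε⌋ := by exact_mod_cast hfloor_pos
    have hlo := (le_div_iff₀' hε).1 (Int.floor_le (u / ε))
    have hhi := (div_lt_iff₀' hε).1 (Int.lt_floor_add_one (u / ε))
    constructor <;> nlinarith [hu.1, hu.2]
  by_cases hx : h (ε * ⌊x.1 / ε⌋, ε * ⌊x.2 / ε⌋) = 0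
  · rw [hx, norm_zero]
    exact indicator_nonneg (fun _ _ => (abs_nonneg _).trans (hB 0)) x
  · rw [indicator_of_mem (mem_prod.2 ⟨mem_of_floor (hsupp hx).1, mem_of_floor (hsupp hx).2⟩)]
    exact hB _

lemma integrable_indicator_Icc_prod (R B : ℝ) :
    Integrable ((Icc 0 (2 * R) ×ˢ Icc 0 (2 * R)).indicator fun _ : ℝ × ℝ => B) :=
  (integrable_indicator_iff (measurableSet_Icc.prod measurableSet_Icc)).2
    (integrableOn_const (isCompact_Icc.prod isCompact_Icc).measure_lt_top.ne)

lemma abs_sq_mul_tsum_le (hsupp : h.support ⊆ Ioc 0 R ×ˢ Ioc 0 R) (hB : ∀ x, |h x| ≤ B)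
    (hε : 0 < ε) :
    |ε ^ 2 * ∑' z : ℤ × ℤ, h (ε * z.1, ε * z.2)| ≤
      ∫ x, (Icc 0 (2 * R) ×ˢ Icc 0 (2 * R)).indicator (fun _ : ℝ × ℝ => B) x := by
  rw [sq_mul_tsum_eq_integral hsupp hε]
  exact norm_integral_le_of_norm_le (integrable_indicator_Icc_prod R B)
    (ae_of_all _ (norm_comp_mul_floor_le hsupp hB hε))

lemma tendsto_mul_floor_div (u : ℝ) : Tendsto (fun ε : ℝ => ε * ⌊u / ε⌋) (𝓝[>] 0) (𝓝 u) := by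
  have hlo : Tendsto (fun ε : ℝ => u - ε) (𝓝[>] 0) (𝓝 u) := by
    simpa using (tendsto_id.const_sub u).mono_left (nhdsWithin_le_nhds (a := (0 : ℝ)))
  refine tendsto_of_tendsto_of_tendsto_of_le_of_le' hlo tendsto_const_nhds ?_ ?_ <;>
  filter_upwards [self_mem_nhdsWithin] with ε (hε : 0 < ε)
  · have := (div_lt_iff₀' hε).1 (Int.lt_floor_add_one (u / ε))
    linarith
  · exact (le_div_iff₀' hε).1 (Int.floor_le (u / ε))

lemma tendsto_sq_mul_tsum (hmeas : Measurable h) (hsupp : h.support ⊆ Ioc 0 R ×ˢ Ioc 0 R)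
    (hB : ∀ x, |h x| ≤ B) (hcont : ∀ᵐ x, ContinuousAt h x) :
    Tendsto (fun ε : ℝ => ε ^ 2 * ∑' z : ℤ × ℤ, h (ε * z.1, ε * z.2)) (𝓝[>] 0) (𝓝 (∫ x, h x)) := by
  have hlim : Tendsto (fun ε : ℝ => ∫ x : ℝ × ℝ, h (ε * ⌊x.1 / ε⌋, ε * ⌊x.2 / ε⌋)) (𝓝[>] 0)
      (𝓝 (∫ x, h x)) := by
    refine tendsto_integral_filter_of_dominated_convergence _
      (.of_forall fun ε => (by fun_prop : Measurable _).aestronglyMeasurable) ?_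
      (integrable_indicator_Icc_prod R B) ?_
    · filter_upwards [self_mem_nhdsWithin] with ε hε
      exact ae_of_all _ (norm_comp_mul_floor_le hsupp hB hε)
    · filter_upwards [hcont] with x hx
      exact hx.tendsto.comp ((tendsto_mul_floor_div x.1).prodMk_nhds (tendsto_mul_floor_div x.2))
  refine hlim.congr' ?_
  filter_upwards [self_mem_nhdsWithin] with ε hε
  exact (sq_mul_tsum_eq_integral hsupp hε).symm

lemma sq_mul_tsum_coprime_eq_tsum_moebius (hsupp : h.support ⊆ Ioc 0 R ×ˢ Ioc 0 R) (hε : 0 < ε) :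
    ε ^ 2 * ∑' z : ℤ × ℤ, (if z.1.gcd z.2 = 1 then h (ε * z.1, ε * z.2) else 0) =
      ∑' d : ℕ, (ArithmeticFunction.moebius d : ℝ) / d ^ 2 *
        ((d * ε) ^ 2 * ∑' z : ℤ × ℤ, h (d * ε * z.1, d * ε * z.2)) := by
  have h0 : h (ε * ((0 : ℤ × ℤ).1 : ℝ), ε * ((0 : ℤ × ℤ).2 : ℝ)) = 0 := by
    by_contra hne
    simpa using (hsupp hne).1.1
  rw [tsum_coprime_eq_tsum_moebius (g := fun z => h (ε * z.1, ε * z.2))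
    (finite_support_comp_mul hsupp hε) h0, ← tsum_mul_left]
  refine tsum_congr fun d => ?_
  rcases d.eq_zero_or_pos with rfl | hd
  · simp
  have hd' : (d : ℝ) ≠ 0 := by exact_mod_cast hd.ne'
  simp only [Prod.smul_fst, Prod.smul_snd, smul_eq_mul, Int.cast_mul, Int.cast_natCast,
    mul_left_comm ε, mul_assoc]
  field_simp

lemma tendsto_const_mul_nhdsGT_zero {K : ℝ} (hK : 0 < K) :
    Tendsto (fun δ => K * δ) (𝓝[>] 0) (𝓝[>] 0) :=
  tendsto_iff_comap.2 (comap_mulLeft_nhdsGT_zero hK).ge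

theorem tendsto_sq_mul_tsum_coprime (hmeas : Measurable h)
    (hsupp : h.support ⊆ Ioc 0 R ×ˢ Ioc 0 R) (hB : ∀ x, |h x| ≤ B)
    (hcont : ∀ᵐ x, ContinuousAt h x) :
    Tendsto (fun ε : ℝ => ε ^ 2 *
        ∑' z : ℤ × ℤ, if z.1.gcd z.2 = 1 then h (ε * z.1, ε * z.2) else 0)
      (𝓝[>] 0) (𝓝 (6 / Real.pi ^ 2 * ∫ x, h x)) := by
  set A := ∫ x, (Icc 0 (2 * R) ×ˢ Icc 0 (2 * R)).indicator (fun _ : ℝ × ℝ => B) x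
  have hlim : Tendsto (fun ε : ℝ => ∑' d : ℕ, (ArithmeticFunction.moebius d : ℝ) / d ^ 2 *
        ((d * ε) ^ 2 * ∑' z : ℤ × ℤ, h (d * ε * z.1, d * ε * z.2)))
      (𝓝[>] 0) (𝓝 (∑' d : ℕ, (ArithmeticFunction.moebius d : ℝ) / d ^ 2 * ∫ x, h x)) := by
    refine tendsto_tsum_of_dominated_convergence (bound := fun d : ℕ => 1 / (d : ℝ) ^ 2 * A)
      ((Real.summable_one_div_nat_pow.2 one_lt_two).mul_right A) (fun d => ?_) ?_
    · rcases d.eq_zero_or_pos with rfl | hd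
      · simp
      exact ((tendsto_sq_mul_tsum hmeas hsupp hB hcont).comp
        (tendsto_const_mul_nhdsGT_zero (Nat.cast_pos.2 hd))).const_mul _
    · filter_upwards [self_mem_nhdsWithin] with ε (hε : 0 < ε) d
      rcases d.eq_zero_or_pos with rfl | hd
      · simp
      rw [norm_mul, norm_div, norm_pow, Real.norm_natCast, Real.norm_eq_abs]
      gcongr
      · exact_mod_cast ArithmeticFunction.abs_moebius_le_one
      · exact abs_sq_mul_tsum_le hsupp hB (by positivity)
  rw [tsum_mul_right, tsum_moebius_div_sq] at hlim
  refine hlim.congr' ?_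
  filter_upwards [self_mem_nhdsWithin] with ε hε
  exact (sq_mul_tsum_coprime_eq_tsum_moebius hsupp hε).symm

end PrimitiveRiemannSum

section LimitDensity

lemma continuous_mediantWeight : Continuous (Function.uncurry mediantWeight) := by
  unfold Function.uncurry mediantWeight
  fun_prop (disch := intro x; positivity)

lemma mediantWeight_nonneg (u v : ℝ) : 0 ≤ mediantWeight u v := le_max_left _ _

lemma mediantWeight_le_one (u v : ℝ) : mediantWeight u v ≤ 1 := by
  have inv_max_le (x : ℝ) : (max 1 x)⁻¹ ≤ 1 := inv_le_one_of_one_le₀ (le_max_left 1 x)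
  exact max_le zero_le_one (by linarith [inv_max_le ((u + v) * u), inv_max_le ((u + v) * v)])

lemma mediantWeight_of_one_le_mul {u v : ℝ} (hu : 0 < u) (hv : 0 < v) (huv : 1 ≤ u * v) :
    mediantWeight u v = 0 := by
  rw [mediantWeight, max_eq_right (by nlinarith : 1 ≤ (u + v) * u),
    max_eq_right (by nlinarith : 1 ≤ (u + v) * v)]
  have hsum : ((u + v) * u)⁻¹ + ((u + v) * v)⁻¹ = (u * v)⁻¹ := by field_simp; ring
  rw [hsum]
  exact max_eq_left (sub_nonpos.2 (inv_le_one_of_one_le₀ huv))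

lemma mediantWeight_of_mul_le_one {u v : ℝ} (hu : 0 ≤ u) (hv : 0 ≤ v) (huv : u * v ≤ 1) :
    mediantWeight u v = (max 1 ((u + v) * u))⁻¹ + (max 1 ((u + v) * v))⁻¹ - 1 := by
  refine max_eq_right (sub_nonneg.2 ?_)
  rcases le_total ((u + v) * u) 1 with h | h
  · rw [max_eq_left h, inv_one]
    exact le_add_of_nonneg_right (by positivity)
  rcases le_total ((u + v) * v) 1 with h' | h'
  · rw [max_eq_left h', inv_one]
    exact le_add_of_nonneg_left (by positivity)
  rw [max_eq_right h, max_eq_right h']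
  have hu' : 0 < u := hu.lt_of_ne (by rintro rfl; norm_num at h)
  have hv' : 0 < v := hv.lt_of_ne (by rintro rfl; norm_num at h')
  calc 1 ≤ (u * v)⁻¹ := one_le_inv_iff₀.2 ⟨by positivity, huv⟩
    _ = ((u + v) * u)⁻¹ + ((u + v) * v)⁻¹ := by field_simp; ring

variable {z b : ℝ}

lemma continuous_inv_max_one (z : ℝ) : Continuous fun u : ℝ => (max 1 (z * u))⁻¹ := by
  fun_prop (disch := intro x; positivity)

lemma integral_inv_max_one (hz : 0 < z) (hb : 1 / z ≤ b) :
    ∫ u in 0..b, (max 1 (z * u))⁻¹ = (1 + Real.log (z * b)) / z := by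
  have hz' : 0 < 1 / z := by positivity
  have hleft : ∫ u in 0..1 / z, (max 1 (z * u))⁻¹ = ∫ _ in 0..1 / z, (1 : ℝ) := by
    refine intervalIntegral.integral_congr fun u hu => ?_
    rw [uIcc_of_le hz'.le] at hu
    rw [max_eq_left ((le_div_iff₀' hz).1 hu.2), inv_one]
  have hright : ∫ u in 1 / z..b, (max 1 (z * u))⁻¹ = ∫ u in 1 / z..b, z⁻¹ * u⁻¹ := by
    refine intervalIntegral.integral_congr fun u hu => ?_
    rw [uIcc_of_le hb] at hu
    rw [max_eq_right ((div_le_iff₀' hz).1 hu.1), mul_inv]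
  rw [← intervalIntegral.integral_add_adjacent_intervals
    ((continuous_inv_max_one z).intervalIntegrable 0 (1 / z))
    ((continuous_inv_max_one z).intervalIntegrable (1 / z) b), hleft, hright,
    intervalIntegral.integral_const, intervalIntegral.integral_const_mul,
    integral_inv_of_pos hz' (hz'.trans_le hb), div_div_eq_mul_div, div_one, mul_comm b, sub_zero,
    smul_eq_mul, mul_one]
  ring

lemma integral_mediantWeight_eq_of_mul_le_one (hz : 0 < z) (hb : 1 / z ≤ b) (hbz : b ≤ z)
    (hweight : ∀ u ∈ Icc 0 b, u * (z - u) ≤ 1) :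
    ∫ u in 0..b, mediantWeight u (z - u) =
      (1 + Real.log (z * b)) / z + (∫ u in z - b..z, (max 1 (z * u))⁻¹) - b := by
  have hb0 : 0 ≤ b := le_trans (by positivity) hb
  have hcont := continuous_inv_max_one z
  have hcongr : ∫ u in 0..b, mediantWeight u (z - u) =
      ∫ u in 0..b, ((max 1 (z * u))⁻¹ + (max 1 (z * (z - u)))⁻¹ - 1) := by
    refine intervalIntegral.integral_congr fun u hu => ?_
    rw [uIcc_of_le hb0] at hu
    rw [mediantWeight_of_mul_le_one hu.1 (by linarith [hu.2]) (hweight u hu), add_sub_cancel]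
  have hreflect := intervalIntegral.integral_comp_sub_left (a := 0) (b := b)
    (fun u => (max 1 (z * u))⁻¹) z
  rw [hcongr, intervalIntegral.integral_sub, intervalIntegral.integral_add,
    integral_inv_max_one hz hb, hreflect, intervalIntegral.integral_const, sub_zero,
    sub_zero, smul_eq_mul, mul_one]
  · exact hcont.intervalIntegrable _ _
  · exact (hcont.comp (by fun_prop : Continuous fun u => z - u)).intervalIntegrable _ _
  · exact (hcont.add (hcont.comp (by fun_prop : Continuous fun u => z - u))).intervalIntegrable _ _
  · exact continuous_const.intervalIntegrable _ _

lemma integral_mediantWeight_of_le_one (hz : 0 ≤ z) (hz1 : z ≤ 1) :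
    ∫ u in 0..z, mediantWeight u (z - u) = z := by
  have hcongr : ∫ u in 0..z, mediantWeight u (z - u) = ∫ _ in 0..z, (1 : ℝ) := by
    refine intervalIntegral.integral_congr fun u hu => ?_
    rw [uIcc_of_le hz] at hu
    rw [mediantWeight_of_mul_le_one hu.1 (sub_nonneg.2 hu.2) (by nlinarith [hu.1, hu.2]),
      add_sub_cancel, max_eq_left (by nlinarith [hu.1, hu.2]),
      max_eq_left (by nlinarith [hu.1, hu.2]), inv_one]
    norm_num
  rw [hcongr, intervalIntegral.integral_const, sub_zero, smul_eq_mul, mul_one]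

lemma integral_mediantWeight_of_le_two (hz : 1 ≤ z) (hz2 : z ≤ 2) :
    ∫ u in 0..z, mediantWeight u (z - u) = (2 + 4 * Real.log z) / z - z := by
  have hinv : 1 / z ≤ z := (div_le_iff₀ (by linarith)).2 (by nlinarith)
  rw [integral_mediantWeight_eq_of_mul_le_one (by linarith) hinv le_rfl
    fun u _ => by nlinarith [sq_nonneg (u - z / 2)], sub_self,
    integral_inv_max_one (by linarith) hinv, Real.log_mul (by linarith) (by linarith)]
  ring

lemma integral_mediantWeight_eq_two_mul (z : ℝ) :
    ∫ u in 0..z, mediantWeight u (z - u) = 2 * ∫ u in 0..z / 2, mediantWeight u (z - u) := by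
  have hint (x y : ℝ) : IntervalIntegrable (fun u => mediantWeight u (z - u)) volume x y :=
    (continuous_mediantWeight.comp
      (by fun_prop : Continuous fun u : ℝ => (u, z - u))).intervalIntegrable x y
  have hcomm (u : ℝ) : mediantWeight (z - u) (z - (z - u)) = mediantWeight u (z - u) := by
    rw [sub_sub_cancel, mediantWeight, mediantWeight, add_comm u, add_comm (_)⁻¹]
  have hreflect := intervalIntegral.integral_comp_sub_left (a := 0) (b := z / 2)
    (fun u => mediantWeight u (z - u)) z
  simp only [hcomm, sub_zero, sub_half] at hreflect
  rw [← intervalIntegral.integral_add_adjacent_intervals (hint 0 (z / 2)) (hint (z / 2) z),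
    ← hreflect, two_mul]

lemma integral_mediantWeight_of_root (hb : 0 < b) (hbz : b ≤ z / 2) (hroot : b * (z - b) = 1) :
    ∫ u in 0..z, mediantWeight u (z - u) = (2 + 4 * Real.log (z * b)) / z - 2 * b := by
  have : 1 ≤ z := by nlinarith [sq_nonneg (z / 2 - b)]
  have hinv : 1 / z ≤ b := (div_le_iff₀' (by linarith)).2 (by nlinarith)
  have hint (x y : ℝ) : IntervalIntegrable (fun u => mediantWeight u (z - u)) volume x y :=
    (continuous_mediantWeight.comp
      (by fun_prop : Continuous fun u : ℝ => (u, z - u))).intervalIntegrable x y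
  have hmiddle : ∫ u in b..z / 2, mediantWeight u (z - u) = ∫ _ in b..z / 2, (0 : ℝ) := by
    refine intervalIntegral.integral_congr fun u hu => ?_
    rw [uIcc_of_le hbz] at hu
    exact mediantWeight_of_one_le_mul (by linarith [hu.1]) (by linarith [hu.2])
      (by nlinarith [hu.1, hu.2])
  have hcont := continuous_inv_max_one z
  have htail : ∫ u in z - b..z, (max 1 (z * u))⁻¹ =
      (1 + Real.log (z * z)) / z - (1 + Real.log (z * (z - b))) / z := by
    rw [← integral_inv_max_one (by linarith) (by linarith),
      ← integral_inv_max_one (by linarith) (by linarith),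
      intervalIntegral.integral_interval_sub_left (hcont.intervalIntegrable _ _)
        (hcont.intervalIntegrable _ _)]
  have hlog : Real.log (z - b) = -Real.log b := by
    rw [← Real.log_inv, eq_inv_of_mul_eq_one_right hroot]
  rw [integral_mediantWeight_eq_two_mul, ← intervalIntegral.integral_add_adjacent_intervals
      (hint 0 b) (hint b (z / 2)), hmiddle, intervalIntegral.integral_zero, add_zero,
    integral_mediantWeight_eq_of_mul_le_one (by linarith) hinv (by linarith)
      fun u hu => by nlinarith [hu.1, hu.2], htail, Real.log_mul (by linarith) hb.ne',
    Real.log_mul (by linarith) (by linarith), Real.log_mul (by linarith) (by linarith), hlog]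
  ring

lemma integral_mediantWeight_of_two_le (hz : 2 ≤ z) :
    ∫ u in 0..z, mediantWeight u (z - u) =
      (2 - 4 * Real.log (1 / 2 + √(1 / 4 - (z ^ 2)⁻¹))) / z - z +
        2 * z * √(1 / 4 - (z ^ 2)⁻¹) := by
  have hz0 : 0 < z := by linarith
  set c := √(1 / 4 - (z ^ 2)⁻¹)
  have hc0 : 0 ≤ c := Real.sqrt_nonneg _
  have hc : c < 1 / 2 := (Real.sqrt_lt' one_half_pos).2 (by norm_num; positivity)
  have hzc : z ^ 2 * c ^ 2 = z ^ 2 / 4 - 1 := by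
    rw [Real.sq_sqrt]
    · field_simp
    · rw [sub_nonneg, inv_le_comm₀ (by positivity) (by norm_num)]
      nlinarith
  have hinv : z * (z * (1 / 2 - c)) = (1 / 2 + c)⁻¹ :=
    eq_inv_of_mul_eq_one_left (by linear_combination -hzc)
  rw [integral_mediantWeight_of_root (b := z * (1 / 2 - c)) (mul_pos hz0 (by linarith))
    (by nlinarith) (by linear_combination -hzc), hinv, Real.log_inv]
  ring

theorem etaLog_eq_integral_mediantWeight (s : ℝ) :
    etaLog s = 6 / Real.pi ^ 2 *
      (Real.exp s * ∫ u in 0..Real.exp s, mediantWeight u (Real.exp s - u)) := by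
  have hexp : Real.exp (2 * s) = Real.exp s ^ 2 := by rw [← Real.exp_nat_mul]; norm_num
  have hexp' : Real.exp (-2 * s) = (Real.exp s ^ 2)⁻¹ := by rw [neg_mul, Real.exp_neg, hexp]
  have hpos := Real.exp_pos s
  rw [etaLog, hexp, hexp']
  split_ifs with h0 h2
  · rw [integral_mediantWeight_of_le_one hpos.le (Real.exp_le_one_iff.2 h0), ← sq]
  · rw [integral_mediantWeight_of_le_two (Real.one_le_exp (not_le.1 h0).le)
      ((Real.le_log_iff_exp_le two_pos).1 h2), Real.log_exp]
    field_simp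
    ring
  · rw [integral_mediantWeight_of_two_le ((Real.log_le_iff_le_exp two_pos).1 (not_le.1 h2).le)]
    field_simp
    ring

end LimitDensity

section LimitMeasure

/-- The limiting distribution of the logarithm of smallest denominators. -/
noncomputable def limitMeasure : Measure ℝ :=
  volume.withDensity fun s => ENNReal.ofReal (etaLog s)

/-- The pairs of positive reals with sum at most `R`: in units of `1 / √δ`, the denominators of
Farey neighbours whose mediant has denominator at most `R`. -/
def mediantTriangle (R : ℝ) : Set (ℝ × ℝ) := {x | 0 < x.1 ∧ 0 < x.2 ∧ x.1 + x.2 ≤ R}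

lemma measurableSet_mediantTriangle (R : ℝ) : MeasurableSet (mediantTriangle R) := by
  unfold mediantTriangle
  measurability

lemma etaLog_nonneg (s : ℝ) : 0 ≤ etaLog s := by
  rw [etaLog_eq_integral_mediantWeight]
  have := intervalIntegral.integral_nonneg (μ := volume) (Real.exp_pos s).le
    fun u _ => mediantWeight_nonneg u (Real.exp s - u)
  positivity

lemma measurable_etaLog : Measurable etaLog := by
  unfold etaLog
  refine Measurable.ite measurableSet_Iic (by fun_prop) (Measurable.ite measurableSet_Iic ?_ ?_) <;>
  fun_prop

lemma ofReal_integral_mediantWeight {z : ℝ} (hz : 0 ≤ z) :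
    ENNReal.ofReal (∫ u in 0..z, mediantWeight u (z - u)) =
      ∫⁻ u in Ioo 0 z, ENNReal.ofReal (mediantWeight u (z - u)) := by
  have hcont : Continuous fun u : ℝ => mediantWeight u (z - u) :=
    continuous_mediantWeight.comp (by fun_prop : Continuous fun u : ℝ => (u, z - u))
  rw [intervalIntegral.integral_of_le hz, ofReal_integral_eq_lintegral_ofReal
    (hcont.integrableOn_Ioc) (ae_of_all _ fun u => mediantWeight_nonneg _ _),
    setLIntegral_congr Ioo_ae_eq_Ioc]

lemma lintegral_mediantTriangle (R : ℝ) :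
    ∫⁻ x in mediantTriangle R, ENNReal.ofReal (mediantWeight x.1 x.2) =
      ∫⁻ z in Ioc 0 R, ∫⁻ u in Ioo 0 z, ENNReal.ofReal (mediantWeight u (z - u)) := by
  have hmeas : Measurable ((mediantTriangle R).indicator fun x =>
      ENNReal.ofReal (mediantWeight x.1 x.2)) :=
    continuous_mediantWeight.measurable.ennreal_ofReal.indicator (measurableSet_mediantTriangle R)
  have hslice (z u : ℝ) : (mediantTriangle R).indicator
      (fun x => ENNReal.ofReal (mediantWeight x.1 x.2)) (u, z - u) =
        (Ioc 0 R).indicator (fun _ => (Ioo 0 z).indicator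
          (fun u => ENNReal.ofReal (mediantWeight u (z - u))) u) z := by
    simp only [indicator, mediantTriangle, mem_ofPred_eq, mem_Ioc, mem_Ioo, sub_pos, add_sub_cancel,
      ← ite_and]
    exact if_congr (by grind) rfl rfl
  calc ∫⁻ x in mediantTriangle R, ENNReal.ofReal (mediantWeight x.1 x.2)
      = ∫⁻ u, ∫⁻ v, (mediantTriangle R).indicator
          (fun x => ENNReal.ofReal (mediantWeight x.1 x.2)) (u, v) := by
        rw [← lintegral_indicator (measurableSet_mediantTriangle R), Measure.volume_eq_prod,
          lintegral_prod _ hmeas.aemeasurable]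
    _ = ∫⁻ u, ∫⁻ z, (mediantTriangle R).indicator
          (fun x => ENNReal.ofReal (mediantWeight x.1 x.2)) (u, z - u) :=
        lintegral_congr fun u => (lintegral_sub_right_eq_self
          (fun v => (mediantTriangle R).indicator
            (fun x => ENNReal.ofReal (mediantWeight x.1 x.2)) (u, v)) u).symm
    _ = ∫⁻ z, ∫⁻ u, (mediantTriangle R).indicator
          (fun x => ENNReal.ofReal (mediantWeight x.1 x.2)) (u, z - u) :=
        lintegral_lintegral_swap (by fun_prop)
    _ = _ := by
        rw [← lintegral_indicator measurableSet_Ioc]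
        refine lintegral_congr fun z => ?_
        simp only [hslice]
        by_cases hz : z ∈ Ioc 0 R
        · simp only [indicator_of_mem hz, lintegral_indicator measurableSet_Ioo]
        · simp only [indicator_of_notMem hz, lintegral_zero]

lemma limitMeasure_Iic (t : ℝ) :
    limitMeasure (Iic t) = ENNReal.ofReal (6 / Real.pi ^ 2) *
      ∫⁻ x in mediantTriangle (Real.exp t), ENNReal.ofReal (mediantWeight x.1 x.2) := by
  have himage : Real.exp '' Iic t = Ioc 0 (Real.exp t) := by
    ext z
    refine ⟨?_, fun hz => ⟨Real.log z, (Real.log_le_iff_le_exp hz.1).2 hz.2, Real.exp_log hz.1⟩⟩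
    rintro ⟨s, hs, rfl⟩
    exact ⟨Real.exp_pos s, Real.exp_le_exp.2 hs⟩
  have hchange := lintegral_image_eq_lintegral_abs_deriv_mul measurableSet_Iic
    (fun s _ => (Real.hasDerivAt_exp s).hasDerivWithinAt) (Real.exp_injective.injOn (s := Iic t))
    fun z => ∫⁻ u in Ioo 0 z, ENNReal.ofReal (mediantWeight u (z - u))
  rw [lintegral_mediantTriangle, ← himage, hchange, limitMeasure,
    withDensity_apply _ measurableSet_Iic, ← lintegral_const_mul' _ _ ENNReal.ofReal_ne_top]
  refine lintegral_congr fun s => ?_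
  rw [etaLog_eq_integral_mediantWeight, ENNReal.ofReal_mul (by positivity),
    ENNReal.ofReal_mul (Real.exp_pos s).le, ofReal_integral_mediantWeight (Real.exp_pos s).le,
    abs_of_pos (Real.exp_pos s)]

lemma limitMeasure_real_Iic (t : ℝ) :
    limitMeasure.real (Iic t) = 6 / Real.pi ^ 2 *
      ∫ x, (mediantTriangle (Real.exp t)).indicator (Function.uncurry mediantWeight) x := by
  rw [Measure.real, limitMeasure_Iic, ENNReal.toReal_mul, ENNReal.toReal_ofReal (by positivity),
    integral_indicator (measurableSet_mediantTriangle _),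
    integral_eq_lintegral_of_nonneg_ae (f := Function.uncurry mediantWeight)
      (ae_of_all _ fun x => mediantWeight_nonneg _ _)
      continuous_mediantWeight.aestronglyMeasurable]
  rfl

end LimitMeasure

section UnitInterval

lemma convex_mediantTriangle (R : ℝ) : Convex ℝ (mediantTriangle R) := by
  rintro x ⟨hx1, hx2, hx⟩ y ⟨hy1, hy2, hy⟩ a b ha hb hab
  refine ⟨?_, ?_, ?_⟩ <;>
  simp only [Prod.fst_add, Prod.snd_add, Prod.smul_fst, Prod.smul_snd, smul_eq_mul]
  · exact convex_Ioi (0 : ℝ) hx1 hy1 ha hb hab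
  · exact convex_Ioi (0 : ℝ) hx2 hy2 ha hb hab
  · have := convex_Iic R hx hy ha hb hab
    simp only [mem_Iic, smul_eq_mul] at this
    linarith

lemma ae_continuousAt_indicator_mediantWeight (R : ℝ) :
    ∀ᵐ x, ContinuousAt ((mediantTriangle R).indicator (Function.uncurry mediantWeight)) x := by
  have hfrontier := (convex_mediantTriangle R).addHaar_frontier (volume : Measure (ℝ × ℝ))
  filter_upwards [compl_mem_ae_iff.2 hfrontier] with x hx
  rw [compl_frontier_eq_union_interior] at hx
  rcases hx with hx | hx
  · exact continuous_mediantWeight.continuousAt.congr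
      (eqOn_indicator.symm.eventuallyEq_of_mem (mem_interior_iff_mem_nhds.1 hx))
  · exact continuousAt_const.congr
      (eqOn_indicator'.symm.eventuallyEq_of_mem (mem_interior_iff_mem_nhds.1 hx))

open Classical in
lemma volume_real_Icc_inter_qmin_mem {δ : ℝ} (hδ : 0 < δ) (R : ℝ) :
    volume.real (Icc 0 1 ∩ {y | qmin y δ ∈ {q : ℕ | 2 ≤ q ∧ q * √δ ≤ R}}) =
      √δ ^ 2 * ∑' z : ℤ × ℤ, if z.1.gcd z.2 = 1 then
        (mediantTriangle R).indicator (Function.uncurry mediantWeight) (√δ * z.1, √δ * z.2)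
        else 0 := by
  have hinj : Function.Injective (Prod.map Nat.cast Nat.cast : ℕ × ℕ → ℤ × ℤ) :=
    Nat.cast_injective.prodMap Nat.cast_injective
  have hsqrt : 0 < √δ := Real.sqrt_pos.2 hδ
  have hmem (z : ℕ × ℕ) : (√δ * z.1, √δ * z.2) ∈ mediantTriangle R ↔
      0 < z.1 ∧ 0 < z.2 ∧ ((z.1 + z.2 : ℕ) : ℝ) * √δ ≤ R := by
    simp only [mediantTriangle, mem_ofPred_eq, mul_comm √δ, mul_pos_iff_of_pos_right hsqrt,
      Nat.cast_pos, ← add_mul, Nat.cast_add]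
  rw [Measure.real, volume_Icc_inter_qmin_mem hδ fun q hq => hq.1, ENNReal.tsum_toReal_eq,
    ← hinj.tsum_eq, ← tsum_mul_left]
  · refine tsum_congr fun z => ?_
    simp only [Prod.map, Int.gcd_natCast_natCast, Int.cast_natCast, mem_ofPred_eq, indicator, hmem]
    by_cases hz : 0 < z.1 ∧ 0 < z.2 ∧ ((z.1 + z.2 : ℕ) : ℝ) * √δ ≤ R
    · have htwo : 2 ≤ z.1 + z.2 := by omega
      simp only [hz, htwo, true_and, and_true, if_true, Nat.coprime_iff_gcd_eq_one]
      split_ifs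
      · rw [ENNReal.toReal_ofReal (mul_nonneg hδ.le (mediantWeight_nonneg _ _)), Real.sq_sqrt hδ.le,
          mul_comm (z.1 : ℝ), mul_comm (z.2 : ℝ)]
        rfl
      · rw [ENNReal.toReal_zero, mul_zero]
    · rw [if_neg fun h => hz ⟨h.1.1, h.1.2.1, h.2.2⟩, if_neg hz, ite_self, ENNReal.toReal_zero,
        mul_zero]
  · intro z hz
    have hmem' : (√δ * z.1, √δ * z.2) ∈ mediantTriangle R := by
      by_contra h
      exact hz (by beta_reduce; rw [indicator_of_notMem h, ite_self])
    have hpos {k : ℤ} (hk : 0 < √δ * k) : 0 ≤ k := by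
      exact_mod_cast (pos_of_mul_pos_right hk hsqrt.le).le
    exact ⟨(z.1.toNat, z.2.toNat), Prod.ext (Int.toNat_of_nonneg (hpos hmem'.1))
      (Int.toNat_of_nonneg (hpos hmem'.2.1))⟩
  · intro z
    split_ifs
    exacts [ENNReal.ofReal_ne_top, ENNReal.zero_ne_top]

lemma tendsto_volume_real_Icc_inter_qmin_mem (R : ℝ) :
    Tendsto (fun δ => volume.real (Icc 0 1 ∩ {y | qmin y δ ∈ {q : ℕ | 2 ≤ q ∧ q * √δ ≤ R}}))
      (𝓝[>] 0) (𝓝 (6 / Real.pi ^ 2 *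
        ∫ x, (mediantTriangle R).indicator (Function.uncurry mediantWeight) x)) := by
  have hsqrt : Tendsto Real.sqrt (𝓝[>] 0) (𝓝[>] 0) := by
    refine tendsto_nhdsWithin_iff.2 ⟨?_, ?_⟩
    · simpa only [Real.sqrt_zero] using
        Real.continuous_sqrt.continuousWithinAt.tendsto (x := (0 : ℝ))
    · filter_upwards [self_mem_nhdsWithin] with δ (hδ : 0 < δ) using Real.sqrt_pos.2 hδ
  have hsupp : ((mediantTriangle R).indicator (Function.uncurry mediantWeight)).support ⊆
      Ioc 0 R ×ˢ Ioc 0 R := by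
    intro x hx
    obtain ⟨h1, h2, h12⟩ := mem_of_indicator_ne_zero hx
    exact ⟨⟨h1, by linarith⟩, ⟨h2, by linarith⟩⟩
  have hbound (x : ℝ × ℝ) :
      |(mediantTriangle R).indicator (Function.uncurry mediantWeight) x| ≤ 1 := by
    by_cases hx : x ∈ mediantTriangle R
    · rw [indicator_of_mem hx]
      exact (abs_of_nonneg (mediantWeight_nonneg _ _)).trans_le (mediantWeight_le_one _ _)
    · rw [indicator_of_notMem hx, abs_zero]
      exact zero_le_one
  refine ((tendsto_sq_mul_tsum_coprime (continuous_mediantWeight.measurable.indicator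
    (measurableSet_mediantTriangle R)) hsupp hbound
    (ae_continuousAt_indicator_mediantWeight R)).comp hsqrt).congr' ?_
  filter_upwards [self_mem_nhdsWithin] with δ hδ
  exact (volume_real_Icc_inter_qmin_mem hδ R).symm

lemma volume_real_Icc_inter_qmin_eq_one_le {δ : ℝ} (hδ : 0 < δ) (hδ2 : δ ≤ 2) :
    volume.real (Icc 0 1 ∩ {y | qmin y δ = 1}) ≤ 5 * δ := by
  have hsub : Icc 0 1 ∩ {y | qmin y δ = 1} ⊆ Icc (-1) 1 ∩ fractionNhds (δ / 2) 1 := by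
    rintro y ⟨hy, hq : qmin y δ = 1⟩
    have hmem := (qmin_spec hδ y).2
    rw [hq] at hmem
    exact ⟨⟨by linarith [hy.1], hy.2⟩, hmem⟩
  refine ENNReal.toReal_le_of_le_ofReal (by positivity) ((measure_mono hsub).trans
    ((volume_Icc_inter_fractionNhds_le zero_le_one one_pos (by linarith)).trans_eq ?_))
  congr 1
  push_cast
  ring

theorem tendsto_volume_real_Icc_inter_logDenom_le (t : ℝ) :
    Tendsto (fun δ => volume.real (Icc 0 1 ∩ {y | logDenom δ y ≤ t})) (𝓝[>] 0)
      (𝓝 (limitMeasure.real (Iic t))) := by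
  have hlower := tendsto_volume_real_Icc_inter_qmin_mem (Real.exp t)
  have hone : Tendsto (fun δ : ℝ => 5 * δ) (𝓝[>] 0) (𝓝 0) :=
    (tendsto_const_mul_nhdsGT_zero (by norm_num)).mono_right nhdsWithin_le_nhds
  have hupper := hlower.add hone
  rw [add_zero] at hupper
  have hIcc : volume (Icc (0 : ℝ) 1) ≠ ⊤ := measure_Icc_lt_top.ne
  have finite_inter (s : Set ℝ) : volume (Icc 0 1 ∩ s) ≠ ⊤ :=
    measure_ne_top_of_subset inter_subset_left hIcc
  rw [limitMeasure_real_Iic]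
  refine tendsto_of_tendsto_of_tendsto_of_le_of_le' hlower hupper ?_ ?_
  · filter_upwards [self_mem_nhdsWithin] with δ (hδ : 0 < δ)
    refine measureReal_mono (inter_subset_inter_right _ fun y hy => ?_) (finite_inter _)
    exact (logDenom_le_iff hδ).2 ((le_div_iff₀ (Real.sqrt_pos.2 hδ)).2 hy.2)
  · filter_upwards [Ioc_mem_nhdsGT two_pos] with δ hδ
    have hsub : {y | logDenom δ y ≤ t} ⊆
        {y | qmin y δ ∈ {q : ℕ | 2 ≤ q ∧ q * √δ ≤ Real.exp t}} ∪ {y | qmin y δ = 1} := by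
      intro y hy
      refine or_iff_not_imp_right.2 fun hne => ⟨?_, ?_⟩
      · have := (qmin_spec hδ.1 y).1
        have : qmin y δ ≠ 1 := hne
        omega
      · exact (le_div_iff₀ (Real.sqrt_pos.2 hδ.1)).1 ((logDenom_le_iff hδ.1).1 hy)
    refine (measureReal_mono ((inter_subset_inter_right _ hsub).trans_eq
      (inter_union_distrib_left _ _ _))
      (measure_union_ne_top (finite_inter _) (finite_inter _))).trans
      ((measureReal_union_le _ _).trans
        (add_le_add_right (volume_real_Icc_inter_qmin_eq_one_le hδ.1 hδ.2) _))

end UnitInterval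

section Probability

lemma volume_real_inter_logDenom_le_add_lt {D : Set ℝ} (hD : volume D ≠ ⊤) (δ t : ℝ) :
    volume.real (D ∩ {y | logDenom δ y ≤ t}) + volume.real (D ∩ {y | t < logDenom δ y}) =
      volume.real D := by
  have hmeas : MeasurableSet {y | logDenom δ y ≤ t} := measurable_logDenom δ measurableSet_Iic
  have hcompl : D ∩ {y | t < logDenom δ y} = D \ {y | logDenom δ y ≤ t} := by
    ext y
    simp only [mem_inter_iff, Set.mem_sdiff, mem_ofPred_eq, not_le]
  rw [hcompl, measureReal_inter_add_sdiff hmeas hD]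

lemma volume_real_Icc_inter_logDenom_le_add_lt (δ t : ℝ) :
    volume.real (Icc 0 1 ∩ {y | logDenom δ y ≤ t}) +
      volume.real (Icc 0 1 ∩ {y | t < logDenom δ y}) = 1 := by
  rw [volume_real_inter_logDenom_le_add_lt measure_Icc_lt_top.ne,
    Real.volume_real_Icc_of_le zero_le_one, sub_zero]

lemma tendsto_volume_real_Icc_inter_lt_logDenom (t : ℝ) :
    Tendsto (fun δ => volume.real (Icc 0 1 ∩ {y | t < logDenom δ y})) (𝓝[>] 0)
      (𝓝 (1 - limitMeasure.real (Iic t))) := by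
  refine ((tendsto_volume_real_Icc_inter_logDenom_le t).const_sub 1).congr fun δ => ?_
  linarith [volume_real_Icc_inter_logDenom_le_add_lt δ t]

lemma volume_real_Icc_inter_lt_logDenom_le {δ : ℝ} (hδ : 0 < δ) (hδ1 : δ ≤ 1) (t : ℝ) :
    volume.real (Icc 0 1 ∩ {y | t < logDenom δ y}) ≤ 25 * Real.exp (-2 * t) := by
  refine ENNReal.toReal_le_of_le_ofReal (by positivity) ((measure_mono ?_).trans
    ((volume_Icc_inter_lt_abs_logDenom_le zero_le_one hδ hδ1 t).trans_eq (by norm_num)))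
  rintro y ⟨hy, ht : t < logDenom δ y⟩
  exact ⟨⟨by linarith [hy.1], hy.2⟩, ht.trans_le (le_abs_self _)⟩

lemma tendsto_limitMeasure_real_Iic :
    Tendsto (fun t => limitMeasure.real (Iic t)) atTop (𝓝 1) := by
  have hexp : Tendsto (fun t => 1 - 25 * Real.exp (-2 * t)) atTop (𝓝 1) := by
    have := Real.tendsto_exp_atBot.comp
      (tendsto_id.const_mul_atTop_of_neg (show (-2 : ℝ) < 0 by norm_num))
    simpa using (this.const_mul (25 : ℝ)).const_sub 1
  have hsmall : ∀ᶠ δ : ℝ in 𝓝[>] 0, 0 < δ ∧ δ ≤ 1 := Ioc_mem_nhdsGT one_pos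
  refine tendsto_of_tendsto_of_tendsto_of_le_of_le hexp tendsto_const_nhds (fun t => ?_) fun t => ?_
  · have := le_of_tendsto (tendsto_volume_real_Icc_inter_lt_logDenom t)
      (hsmall.mono fun δ hδ => volume_real_Icc_inter_lt_logDenom_le hδ.1 hδ.2 t)
    linarith
  · refine le_of_tendsto (tendsto_volume_real_Icc_inter_logDenom_le t) (.of_forall fun δ => ?_)
    have : 0 ≤ volume.real (Icc 0 1 ∩ {y | t < logDenom δ y}) := measureReal_nonneg
    linarith [volume_real_Icc_inter_logDenom_le_add_lt δ t]

instance isProbabilityMeasure_limitMeasure : IsProbabilityMeasure limitMeasure := by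
  refine ⟨tendsto_nhds_unique (tendsto_measure_Iic_atTop limitMeasure) ?_⟩
  have htoReal := ENNReal.tendsto_ofReal tendsto_limitMeasure_real_Iic
  rw [ENNReal.ofReal_one] at htoReal
  refine htoReal.congr' ?_
  filter_upwards [tendsto_limitMeasure_real_Iic.eventually_const_lt zero_lt_one] with t ht
  exact ENNReal.ofReal_toReal (ENNReal.toReal_pos_iff.1 ht).2.ne

lemma continuous_limitMeasure_real_Iic : Continuous fun t => limitMeasure.real (Iic t) := by
  have : NullSingletonClass limitMeasure := nullSingletonClass_withDensity _
  have hprim (t : ℝ) : limitMeasure.real (Iic t) =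
      limitMeasure.real (Iic 0) + ∫ _ in 0..t, (1 : ℝ) ∂limitMeasure := by
    rw [← intervalIntegral.integral_Iic_sub_Iic (integrable_const _).integrableOn
      (integrable_const _).integrableOn, setIntegral_const, setIntegral_const, smul_eq_mul,
      smul_eq_mul, mul_one, mul_one, add_sub_cancel]
  rw [funext hprim]
  exact continuous_const.add ((integrable_const _).continuous_primitive 0)

end Probability

section Moebius

/-- The Möbius transformation of the matrix with rows `(a, b)` and `(c, d)`. -/
noncomputable def moebiusMap (a b c d : ℤ) (y : ℝ) : ℝ := (a * y + b) / (c * y + d)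

variable {a b c d : ℤ} {κ δ δ' ω y z : ℝ}

lemma moebiusMap_sub_moebiusMap (hdet : a * d - b * c = 1) (hy : c * y + d ≠ 0)
    (hz : c * z + d ≠ 0) :
    moebiusMap a b c d y - moebiusMap a b c d z = (y - z) / ((c * y + d) * (c * z + d)) := by
  have hdetR : (a : ℝ) * d - b * c = 1 := by exact_mod_cast hdet
  rw [moebiusMap, moebiusMap, div_sub_div _ _ hy hz]
  congr 1
  linear_combination (y - z) * hdetR

lemma moebiusMap_inverse (hdet : a * d - b * c = 1) (hy : c * y + d ≠ 0) :
    (-c : ℤ) * moebiusMap a b c d y + a = (c * y + d)⁻¹ ∧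
      moebiusMap d (-b) (-c) a (moebiusMap a b c d y) = y := by
  have hdetR : (a : ℝ) * d - b * c = 1 := by exact_mod_cast hdet
  have hden : (-c : ℤ) * moebiusMap a b c d y + a = (c * y + d)⁻¹ := by
    rw [moebiusMap]
    push_cast
    field_simp
    linear_combination hdetR
  have hnum : moebiusMap a b c d y * (c * y + d) = a * y + b := div_mul_cancel₀ _ hy
  refine ⟨hden, ?_⟩
  rw [moebiusMap, hden, div_inv_eq_mul]
  push_cast
  linear_combination d * hnum + y * hdetR

lemma qmin_moebiusMap_le (hdet : a * d - b * c = 1) (hδ' : 0 < δ') (hj : 0 < c * y + d)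
    (hκ1 : κ < 1) (hκ : |(c : ℝ)| * (δ' / 2) ≤ κ * (c * y + d))
    (hδ : δ' ≤ (1 - κ) * (c * y + d) ^ 2 * δ) :
    (qmin (moebiusMap a b c d y) δ : ℝ) ≤ (1 + κ) * (c * y + d) * qmin y δ' := by
  obtain ⟨hq, hmem⟩ := qmin_spec hδ' y
  obtain ⟨p, hp⟩ := mem_fractionNhds.1 hmem
  generalize qmin y δ' = q at hq hp ⊢
  have hqR : (0 : ℝ) < q := Nat.cast_pos.2 hq
  obtain ⟨hdev1, hdev2⟩ : -(κ * (c * y + d)) ≤ c * (y - p / q) ∧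
      c * (y - p / q) ≤ κ * (c * y + d) := by
    rw [← abs_le, abs_mul]
    exact (mul_le_mul_of_nonneg_left hp.le (abs_nonneg _)).trans hκ
  have hj_ge : (1 - κ) * (c * y + d) ≤ c * (p / q : ℝ) + d := by linarith
  have hj_le : c * (p / q : ℝ) + d ≤ (1 + κ) * (c * y + d) := by linarith
  have hj' : 0 < c * (p / q : ℝ) + d := (mul_pos (by linarith) hj).trans_le hj_ge
  have hden : ((c * p + d * q : ℤ) : ℝ) = (c * (p / q : ℝ) + d) * q := by
    push_cast
    field_simp
  have hden_pos : 0 < c * p + d * q := Int.cast_pos.1 (hden ▸ mul_pos hj' hqR)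
  obtain ⟨n, hn⟩ := Int.eq_ofNat_of_zero_le hden_pos.le
  rw [hn, Int.cast_natCast] at hden
  rw [hn, Int.natCast_pos] at hden_pos
  have himage : ((a * p + b * q : ℤ) : ℝ) / n = moebiusMap a b c d (p / q) := by
    rw [moebiusMap, hden, ← mul_div_mul_right _ _ hqR.ne']
    push_cast
    field_simp
  have hmem' : moebiusMap a b c d y ∈ fractionNhds (δ / 2) n := by
    refine mem_fractionNhds.2 ⟨a * p + b * q, ?_⟩
    have hjj := mul_pos hj hj'
    rw [himage, moebiusMap_sub_moebiusMap hdet hj.ne' hj'.ne', abs_div, abs_of_pos hjj,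
      div_lt_iff₀ hjj]
    have hδ0 : 0 < δ := pos_of_mul_pos_right (hδ'.trans_le hδ) (by
      have : 0 ≤ 1 - κ := by linarith
      positivity)
    nlinarith [mul_le_mul_of_nonneg_left hj_ge hj.le]
  calc (qmin (moebiusMap a b c d y) δ : ℝ) ≤ n := Nat.cast_le.2 (qmin_le hden_pos hmem')
    _ = (c * (p / q : ℝ) + d) * q := hden
    _ ≤ (1 + κ) * (c * y + d) * q := by gcongr

lemma logDenom_moebiusMap_le (hdet : a * d - b * c = 1) (hδ0 : 0 < δ) (hδ' : 0 < δ')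
    (hj : 0 < c * y + d) (hκ1 : κ < 1) (hκ : |(c : ℝ)| * (δ' / 2) ≤ κ * (c * y + d))
    (hδ : δ' ≤ (1 - κ) * (c * y + d) ^ 2 * δ)
    (hω : (1 + κ) * (c * y + d) * √δ ≤ Real.exp ω * √δ') :
    logDenom δ (moebiusMap a b c d y) ≤ logDenom δ' y + ω := by
  have := Nat.cast_pos (α := ℝ).2 (qmin_spec hδ0 (moebiusMap a b c d y)).1
  have := Nat.cast_pos (α := ℝ).2 (qmin_spec hδ' y).1
  rw [logDenom_eq_log hδ0, logDenom_eq_log hδ', add_comm, Real.log_le_iff_le_exp (by positivity),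
    Real.exp_add, Real.exp_log (by positivity)]
  calc qmin (moebiusMap a b c d y) δ * √δ ≤ (1 + κ) * (c * y + d) * qmin y δ' * √δ := by
        gcongr
        exact qmin_moebiusMap_le hdet hδ' hj hκ1 hκ hδ
    _ = (1 + κ) * (c * y + d) * √δ * qmin y δ' := by ring
    _ ≤ Real.exp ω * √δ' * qmin y δ' := by gcongr
    _ = _ := by ring

end Moebius

section UnimodularInterval

/-- The factor by which the rescaled smallest denominator may change under a Möbius transformation
with `0 < c ≤ κ d` on `[0, 1]`, in logarithmic scale. -/
noncomputable def distortion (κ : ℝ) : ℝ := 2 * Real.log (1 + κ) - Real.log (1 - κ) / 2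

variable {a b c d : ℤ} {κ δ y : ℝ}

lemma exp_distortion (hκ0 : 0 < κ) (hκ1 : κ < 1) :
    Real.exp (distortion κ) = (1 + κ) ^ 2 / √(1 - κ) := by
  have h1 : 0 < 1 - κ := by linarith
  have h2 : 0 < 1 + κ := by linarith
  rw [distortion, Real.exp_sub, ← Real.log_sqrt h1.le, Real.exp_log (Real.sqrt_pos.2 h1),
    two_mul, Real.exp_add, Real.exp_log h2, sq]

lemma tendsto_distortion : Tendsto distortion (𝓝 0) (𝓝 0) := by
  have : ContinuousAt distortion 0 := by
    unfold distortion
    fun_prop (disch := norm_num)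
  simpa [ContinuousAt, distortion] using this

lemma denominator_bounds (hc : 0 < c) (hcd : c ≤ κ * d) (hd : 0 < d) (hy : y ∈ Icc (0 : ℝ) 1) :
    (0 : ℝ) < d ∧ d ≤ c * y + d ∧ c * y + d ≤ (1 + κ) * d := by
  have hcR : (0 : ℝ) < c := Int.cast_pos.2 hc
  have hcy : c * y ≤ c := mul_le_of_le_one_right hcR.le hy.2
  exact ⟨Int.cast_pos.2 hd, le_add_of_nonneg_left (mul_nonneg hcR.le hy.1), by linarith⟩

lemma logDenom_moebiusMap_le_add (hdet : a * d - b * c = 1) (hc : 0 < c) (hκ0 : 0 < κ) (hκ1 : κ < 1)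
    (hcd : c ≤ κ * d) (hd : 0 < d) (hy : y ∈ Icc 0 1) (hδ : 0 < δ)
    (hδ2 : (1 - κ) * d ^ 2 * δ ≤ 2) :
    logDenom δ (moebiusMap a b c d y) ≤ logDenom ((1 - κ) * d ^ 2 * δ) y + distortion κ := by
  obtain ⟨hdR, hdj, hjd⟩ := denominator_bounds hc hcd hd hy
  have hcR : (0 : ℝ) < c := Int.cast_pos.2 hc
  have hκ : 0 < 1 - κ := by linarith
  refine logDenom_moebiusMap_le hdet hδ (by positivity) (hdR.trans_le hdj) hκ1 ?_ (by gcongr) ?_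
  · calc |(c : ℝ)| * ((1 - κ) * d ^ 2 * δ / 2) ≤ c * 1 := by
          rw [abs_of_pos hcR]
          gcongr
          linarith
      _ ≤ κ * (c * y + d) := by nlinarith
  · calc (1 + κ) * (c * y + d) * √δ ≤ (1 + κ) * ((1 + κ) * d) * √δ := by gcongr
      _ = Real.exp (distortion κ) * √((1 - κ) * d ^ 2 * δ) := by
          rw [exp_distortion hκ0 hκ1, Real.sqrt_mul (by positivity), Real.sqrt_mul hκ.le,
            Real.sqrt_sq hdR.le]
          field_simp

lemma logDenom_le_moebiusMap_add (hdet : a * d - b * c = 1) (hc : 0 < c) (hκ0 : 0 < κ) (hκ1 : κ < 1)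
    (hcd : c ≤ κ * d) (hd : 0 < d) (hy : y ∈ Icc 0 1) (hδ : 0 < δ)
    (hδ2 : (1 + κ) ^ 2 / (1 - κ) * d ^ 2 * δ ≤ 2) :
    logDenom ((1 + κ) ^ 2 / (1 - κ) * d ^ 2 * δ) y ≤
      logDenom δ (moebiusMap a b c d y) + distortion κ := by
  obtain ⟨hdR, hdj, hjd⟩ := denominator_bounds hc hcd hd hy
  have hj : 0 < c * y + d := hdR.trans_le hdj
  have hcR : (0 : ℝ) < c := Int.cast_pos.2 hc
  have hκ : 0 < 1 - κ := by linarith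
  obtain ⟨hden, hinv⟩ := moebiusMap_inverse hdet hj.ne'
  set δ' := (1 + κ) ^ 2 / (1 - κ) * d ^ 2 * δ with hδ'
  have key : logDenom δ' (moebiusMap d (-b) (-c) a (moebiusMap a b c d y)) ≤
      logDenom δ (moebiusMap a b c d y) + distortion κ := by
    refine logDenom_moebiusMap_le (by linarith) (by positivity) hδ (by rw [hden]; positivity) hκ1
      ?_ ?_ ?_ <;> rw [hden]
    · have hδ_le : (1 + κ) ^ 2 * d ^ 2 * δ ≤ 2 * (1 - κ) := by
        rwa [hδ', div_mul_eq_mul_div, div_mul_eq_mul_div, div_le_iff₀ hκ] at hδ2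
      have hcj : c * (c * y + d) ≤ κ * d * ((1 + κ) * d) := by gcongr
      push_cast
      rw [abs_neg, abs_of_pos hcR, ← div_eq_mul_inv, le_div_iff₀ hj]
      nlinarith [mul_le_mul_of_nonneg_right hcj hδ.le, mul_le_mul_of_nonneg_left hδ_le hκ0.le,
        mul_pos (mul_pos (pow_pos hκ0 2) (pow_pos hdR 2)) hδ,
        mul_pos (mul_pos (pow_pos hκ0 3) (pow_pos hdR 2)) hδ]
    · calc δ = (c * y + d) ^ 2 * ((c * y + d)⁻¹ ^ 2 * δ) := by field_simp
        _ ≤ ((1 + κ) * d) ^ 2 * ((c * y + d)⁻¹ ^ 2 * δ) := by gcongr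
        _ = (1 - κ) * (c * y + d)⁻¹ ^ 2 * δ' := by
            rw [hδ']
            field_simp
    · calc (1 + κ) * (c * y + d)⁻¹ * √δ' ≤ (1 + κ) * (d : ℝ)⁻¹ * √δ' := by gcongr
        _ = Real.exp (distortion κ) * √δ := by
            rw [exp_distortion hκ0 hκ1, hδ', Real.sqrt_mul (by positivity),
              Real.sqrt_mul (by positivity), Real.sqrt_div (by positivity),
              Real.sqrt_sq (by positivity), Real.sqrt_sq hdR.le]
            field_simp
  rwa [hinv] at key

end UnimodularInterval

section UnimodularIntervalMeasure

/-- The image of `[0, 1]` under the Möbius transformation of a matrix in `SL(2, ℤ)` with positive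
bottom row `(c, d)`. -/
def unimodularInterval (a b c d : ℤ) : Set ℝ := Icc (b / d : ℝ) ((a + b) / (c + d))

variable {a b c d : ℤ} {κ : ℝ}

lemma unimodularInterval_endpoints_sub (hdet : a * d - b * c = 1) (hc : 0 < c) (hd : 0 < d) :
    ((a + b) / (c + d) - b / d : ℝ) = (d * (c + d) : ℝ)⁻¹ := by
  have : (0 : ℝ) < c := Int.cast_pos.2 hc
  have : (0 : ℝ) < d := Int.cast_pos.2 hd
  have hdetR : (a : ℝ) * d - b * c = 1 := by exact_mod_cast hdet
  field_simp
  linear_combination hdetR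

lemma volume_unimodularInterval (hdet : a * d - b * c = 1) (hc : 0 < c) (hd : 0 < d) :
    volume (unimodularInterval a b c d) = ENNReal.ofReal (d * (c + d) : ℝ)⁻¹ := by
  rw [unimodularInterval, Real.volume_Icc, unimodularInterval_endpoints_sub hdet hc hd]

lemma unimodularInterval_subset_image (hdet : a * d - b * c = 1) (hc : 0 < c) (hd : 0 < d) :
    unimodularInterval a b c d ⊆ moebiusMap a b c d '' Icc 0 1 := by
  intro x hx
  have hcR : (0 : ℝ) < c := Int.cast_pos.2 hc
  have hdR : (0 : ℝ) < d := Int.cast_pos.2 hd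
  have hdetR : (a : ℝ) * d - b * c = 1 := by exact_mod_cast hdet
  have hlo : b ≤ x * d := (div_le_iff₀ hdR).1 hx.1
  have hhi : x * (c + d) ≤ a + b := (le_div_iff₀ (by positivity)).1 hx.2
  have hden : 0 < a - c * x := by
    have : 0 < (a - c * x) * (c + d) := by nlinarith
    exact pos_of_mul_pos_left this (by positivity)
  have hinv := (moebiusMap_inverse (a := d) (b := -b) (c := -c) (d := a) (y := x)
    (by linarith) (by push_cast; linarith)).2
  rw [neg_neg, neg_neg] at hinv
  refine ⟨moebiusMap d (-b) (-c) a x, ?_, hinv⟩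
  simp only [moebiusMap, Int.cast_neg, neg_mul, ← sub_eq_add_neg, neg_add_eq_sub]
  exact ⟨by apply div_nonneg <;> linarith, (div_le_one hden).2 (by linarith)⟩

lemma volume_image_moebiusMap_le (hdet : a * d - b * c = 1) (hc : 0 < c) (hd : 0 < d) {E : Set ℝ}
    (hE : E ⊆ Ici 0) :
    volume (moebiusMap a b c d '' E) ≤ ENNReal.ofReal ((d : ℝ) ^ 2)⁻¹ * volume E := by
  have hcR : (0 : ℝ) < c := Int.cast_pos.2 hc
  have hdR : (0 : ℝ) < d := Int.cast_pos.2 hd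
  have hden {y : ℝ} (hy : y ∈ E) : (d : ℝ) ≤ c * y + d :=
    le_add_of_nonneg_left (mul_nonneg hcR.le (hE hy))
  have hlip : LipschitzOnWith (Real.toNNReal ((d : ℝ) ^ 2)⁻¹) (moebiusMap a b c d) E := by
    refine .of_dist_le_mul fun y hy z hz => ?_
    have hy := hden hy
    have hz := hden hz
    have hjj : (d : ℝ) ^ 2 ≤ (c * y + d) * (c * z + d) := by
      rw [sq]
      gcongr
      linarith
    rw [Real.coe_toNNReal _ (by positivity), Real.dist_eq, Real.dist_eq,
      moebiusMap_sub_moebiusMap hdet (by linarith) (by linarith), abs_div,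
      abs_of_pos ((pow_pos hdR 2).trans_le hjj), div_eq_inv_mul]
    gcongr
  have := hlip.hausdorffMeasure_image_le zero_le_one
  rwa [hausdorffMeasure_real, ENNReal.rpow_one] at this

lemma volume_unimodularInterval_inter_le (hdet : a * d - b * c = 1) (hc : 0 < c) (hd : 0 < d)
    (hcd : c ≤ κ * d) {A E : Set ℝ} (hAE : ∀ y ∈ Icc (0 : ℝ) 1, moebiusMap a b c d y ∈ A → y ∈ E) :
    volume (unimodularInterval a b c d ∩ A) ≤
      ENNReal.ofReal ((1 + κ) * volume.real (Icc 0 1 ∩ E)) *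
        volume (unimodularInterval a b c d) := by
  have : (0 : ℝ) < c := Int.cast_pos.2 hc
  have hdR : (0 : ℝ) < d := Int.cast_pos.2 hd
  have hsub : unimodularInterval a b c d ∩ A ⊆ moebiusMap a b c d '' (Icc 0 1 ∩ E) := by
    rintro x ⟨hx, hxA⟩
    obtain ⟨y, hy, rfl⟩ := unimodularInterval_subset_image hdet hc hd hx
    exact ⟨y, ⟨hy, hAE y hy hxA⟩, rfl⟩
  have hfin : volume (Icc 0 1 ∩ E) ≠ ⊤ :=
    measure_ne_top_of_subset inter_subset_left measure_Icc_lt_top.ne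
  have hscale : ((d : ℝ) ^ 2)⁻¹ ≤ (1 + κ) * (d * (c + d) : ℝ)⁻¹ := by
    rw [← div_eq_mul_inv, le_div_iff₀ (by positivity), inv_mul_le_iff₀ (by positivity)]
    nlinarith
  calc volume (unimodularInterval a b c d ∩ A)
      ≤ volume (moebiusMap a b c d '' (Icc 0 1 ∩ E)) := measure_mono hsub
    _ ≤ ENNReal.ofReal ((d : ℝ) ^ 2)⁻¹ * volume (Icc 0 1 ∩ E) :=
        volume_image_moebiusMap_le hdet hc hd (inter_subset_left.trans Icc_subset_Ici_self)
    _ = ENNReal.ofReal (((d : ℝ) ^ 2)⁻¹ * volume.real (Icc 0 1 ∩ E)) := by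
        rw [ENNReal.ofReal_mul (by positivity), ofReal_measureReal hfin]
    _ ≤ ENNReal.ofReal ((1 + κ) * volume.real (Icc 0 1 ∩ E) * (d * (c + d) : ℝ)⁻¹) := by
        refine ENNReal.ofReal_le_ofReal ?_
        rw [mul_right_comm]
        gcongr
    _ = _ := by
        rw [ENNReal.ofReal_mul' (by positivity), volume_unimodularInterval hdet hc hd]

lemma eventually_volume_unimodularInterval_inter_logDenom_le (hdet : a * d - b * c = 1)
    (hc : 0 < c) (hd : 0 < d) (hκ0 : 0 < κ) (hκ1 : κ < 1) (hcd : c ≤ κ * d) {t C : ℝ}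
    (hC : (1 + κ) * limitMeasure.real (Iic (t + distortion κ)) < C) :
    ∀ᶠ δ in 𝓝[>] 0, volume (unimodularInterval a b c d ∩ {x | logDenom δ x ≤ t}) ≤
      ENNReal.ofReal C * volume (unimodularInterval a b c d) := by
  have : (0 : ℝ) < d := Int.cast_pos.2 hd
  have : 0 < 1 - κ := by linarith
  have hscale := tendsto_const_mul_nhdsGT_zero
    (show 0 < (1 + κ) ^ 2 / (1 - κ) * (d : ℝ) ^ 2 by positivity)
  have hlim := ((tendsto_volume_real_Icc_inter_logDenom_le (t + distortion κ)).comp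
    hscale).const_mul (1 + κ)
  filter_upwards [self_mem_nhdsWithin, hscale.eventually (Ioc_mem_nhdsGT two_pos),
    hlim.eventually_lt_const hC] with δ hδ hδ2 hlt
  refine (volume_unimodularInterval_inter_le hdet hc hd hcd fun y hy hle => ?_).trans
    (mul_le_mul_left (ENNReal.ofReal_le_ofReal hlt.le) _)
  exact (logDenom_le_moebiusMap_add hdet hc hκ0 hκ1 hcd hd hy hδ hδ2.2).trans
    (add_le_add_left hle _)

lemma eventually_volume_unimodularInterval_inter_lt_logDenom (hdet : a * d - b * c = 1)
    (hc : 0 < c) (hd : 0 < d) (hκ0 : 0 < κ) (hκ1 : κ < 1) (hcd : c ≤ κ * d) {t C : ℝ}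
    (hC : (1 + κ) * (1 - limitMeasure.real (Iic (t - distortion κ))) < C) :
    ∀ᶠ δ in 𝓝[>] 0, volume (unimodularInterval a b c d ∩ {x | t < logDenom δ x}) ≤
      ENNReal.ofReal C * volume (unimodularInterval a b c d) := by
  have : (0 : ℝ) < d := Int.cast_pos.2 hd
  have : 0 < 1 - κ := by linarith
  have hscale := tendsto_const_mul_nhdsGT_zero (show 0 < (1 - κ) * (d : ℝ) ^ 2 by positivity)
  have hlim := ((tendsto_volume_real_Icc_inter_lt_logDenom (t - distortion κ)).comp
    hscale).const_mul (1 + κ)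
  filter_upwards [self_mem_nhdsWithin, hscale.eventually (Ioc_mem_nhdsGT two_pos),
    hlim.eventually_lt_const hC] with δ hδ hδ2 hlt
  refine (volume_unimodularInterval_inter_le hdet hc hd hcd fun y hy hgt => ?_).trans
    (mul_le_mul_left (ENNReal.ofReal_le_ofReal hlt.le) _)
  exact sub_lt_iff_lt_add.2 (lt_of_lt_of_le hgt
    (logDenom_moebiusMap_le_add hdet hc hκ0 hκ1 hcd hd hy hδ hδ2.2))

end UnimodularIntervalMeasure

section VitaliCovering

variable {α : Type*} [PseudoMetricSpace α] [MeasurableSpace α] [OpensMeasurableSpace α]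
  [SecondCountableTopology α] {μ : Measure α} [IsLocallyFiniteMeasure μ]

lemma exists_finset_measure_sdiff_le {κ : Type*} {D U : Set α} {t : Set κ} {K : ℝ≥0} {r : κ → ℝ}
    {x : κ → α} {B : κ → Set α} (hU : μ U ≠ ⊤) (hBU : ∀ k ∈ t, B k ⊆ U)
    (hBx : ∀ k ∈ t, B k ⊆ Metric.closedBall (x k) (r k))
    (hBμ : ∀ k ∈ t, μ (Metric.closedBall (x k) (3 * r k)) ≤ K * μ (B k))
    (hint : ∀ k ∈ t, (interior (B k)).Nonempty) (hclosed : ∀ k ∈ t, IsClosed (B k))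
    (hfine : ∀ᵐ y ∂μ, y ∈ D → ∀ ρ > 0, ∃ k ∈ t, r k ≤ ρ ∧ x k = y) {η : ℝ≥0∞} (hη : η ≠ 0) :
    ∃ v : Finset κ, (∀ k ∈ v, k ∈ t) ∧ ∑ k ∈ v, μ (B k) ≤ μ U ∧ μ (D \ ⋃ k ∈ v, B k) ≤ η := by
  set S := {y | y ∈ D → ∀ ρ > 0, ∃ k ∈ t, r k ≤ ρ ∧ x k = y}
  obtain ⟨u, hut, hu, hdisj, hnull⟩ := Vitali.exists_disjoint_covering_ae μ (D ∩ S) t K r x B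
    hBx hBμ hint hclosed fun y hy => hy.2 hy.1
  have sum_le (w : Set κ) (hw : w ⊆ u) : ∑' k : w, μ (B k) ≤ μ U := by
    rw [← measure_biUnion (hu.mono hw) (hdisj.subset hw) fun k hk =>
      (hclosed k (hut (hw hk))).measurableSet]
    exact measure_mono (iUnion₂_subset fun k hk => hBU k (hut (hw hk)))
  have htail := ENNReal.tendsto_tsum_compl_atTop_zero ((sum_le u subset_rfl).trans_lt hU.lt_top).ne
  obtain ⟨v, hv⟩ := (htail.eventually_lt_const (pos_iff_ne_zero.2 hη)).exists
  have hvu : (v.map (Function.Embedding.subtype _) : Set κ) ⊆ u := by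
    rw [Finset.coe_map]
    rintro _ ⟨k, -, rfl⟩
    exact k.2
  refine ⟨v.map (Function.Embedding.subtype _), fun k hk => hut (hvu hk), ?_, ?_⟩
  · rw [← Finset.tsum_subtype']
    exact sum_le _ hvu
  · have : Countable u := hu.to_subtype
    have hcover : D \ ⋃ k ∈ v.map (Function.Embedding.subtype _), B k ⊆
        Sᶜ ∪ ((D ∩ S) \ ⋃ k ∈ u, B k) ∪ ⋃ k : {k // k ∉ v}, B k := by
      rintro y ⟨hyD, hyv⟩
      by_cases hyS : y ∈ S
      · by_cases hyu : y ∈ ⋃ k ∈ u, B k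
        · obtain ⟨k, hk, hyk⟩ := mem_iUnion₂.1 hyu
          exact Or.inr (mem_iUnion.2 ⟨⟨⟨k, hk⟩, fun hkv =>
            hyv (mem_iUnion₂.2 ⟨k, Finset.mem_map_of_mem _ hkv, hyk⟩)⟩, hyk⟩)
        · exact Or.inl (Or.inr ⟨⟨hyD, hyS⟩, hyu⟩)
      · exact Or.inl (Or.inl hyS)
    calc μ (D \ ⋃ k ∈ v.map (Function.Embedding.subtype _), B k)
        ≤ μ Sᶜ + μ ((D ∩ S) \ ⋃ k ∈ u, B k) + ∑' k : {k // k ∉ v}, μ (B k) :=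
          (measure_mono hcover).trans <| (measure_union_le _ _).trans
            (add_le_add (measure_union_le _ _) (measure_iUnion_le _))
      _ ≤ η := by
          rw [hnull, show μ Sᶜ = 0 from hfine, zero_add, zero_add]
          exact hv.le

lemma eventually_measure_inter_le_of_fine_cover [μ.OuterRegular] {ι : Type*} {l : Filter ι}
    {A : ι → Set α} {K : ℝ≥0} {c : ℝ≥0∞} (hc : c ≠ ⊤)
    (hfine : ∀ᵐ y ∂μ, ∀ ρ > 0, ∃ r ≤ ρ, ∃ B ⊆ Metric.closedBall y r,
      μ (Metric.closedBall y (3 * r)) ≤ K * μ B ∧ (interior B).Nonempty ∧ IsClosed B ∧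
        ∀ᶠ i in l, μ (B ∩ A i) ≤ c * μ B)
    {D : Set α} (hD : μ D ≠ ⊤) {η : ℝ≥0∞} (hη : η ≠ 0) :
    ∀ᶠ i in l, μ (D ∩ A i) ≤ c * μ D + η := by
  have hη2 : η / 2 ≠ 0 := (ENNReal.half_pos hη).ne'
  obtain ⟨ε, hε, hεc⟩ := ENNReal.exists_nnreal_pos_mul_lt hc hη2
  obtain ⟨U, hDU, hU, hμU⟩ := D.exists_isOpen_le_add μ (ENNReal.coe_ne_zero.2 hε.ne')
  set t : Set (α × ℝ × Set α) := {k | k.2.2 ⊆ U ∧ k.2.2 ⊆ Metric.closedBall k.1 k.2.1 ∧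
    μ (Metric.closedBall k.1 (3 * k.2.1)) ≤ K * μ k.2.2 ∧ (interior k.2.2).Nonempty ∧
      IsClosed k.2.2 ∧ ∀ᶠ i in l, μ (k.2.2 ∩ A i) ≤ c * μ k.2.2}
  have hfine_t : ∀ᵐ y ∂μ, y ∈ D → ∀ ρ > 0, ∃ k ∈ t, k.2.1 ≤ ρ ∧ k.1 = y := by
    filter_upwards [hfine] with y hy hyD ρ hρ
    obtain ⟨R, hR, hRU⟩ := Metric.nhds_basis_closedBall.mem_iff.1 (hU.mem_nhds (hDU hyD))
    obtain ⟨r, hr, B, hB⟩ := hy (min ρ R) (lt_min hρ hR)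
    exact ⟨(y, r, B), ⟨(hB.1.trans (Metric.closedBall_subset_closedBall
      (hr.trans (min_le_right _ _)))).trans hRU, hB⟩, hr.trans (min_le_left _ _), rfl⟩
  obtain ⟨v, hvt, hsum, hrest⟩ := exists_finset_measure_sdiff_le
    (ne_top_of_le_ne_top (ENNReal.add_ne_top.2 ⟨hD, ENNReal.coe_ne_top⟩) hμU)
    (fun k hk => hk.1) (fun k hk => hk.2.1) (fun k hk => hk.2.2.1) (fun k hk => hk.2.2.2.1)
    (fun k hk => hk.2.2.2.2.1) hfine_t hη2
  have hlocal : ∀ᶠ i in l, ∀ k ∈ v, μ (k.2.2 ∩ A i) ≤ c * μ k.2.2 :=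
    (v.eventually_all).2 fun k hk => (hvt k hk).2.2.2.2.2
  filter_upwards [hlocal] with i hi
  have hcover : D ∩ A i ⊆ (D \ ⋃ k ∈ v, k.2.2) ∪ ⋃ k ∈ v, k.2.2 ∩ A i := by
    rintro y ⟨hyD, hyA⟩
    by_cases hy : y ∈ ⋃ k ∈ v, k.2.2
    · exact Or.inr (by simpa only [← iUnion₂_inter] using ⟨hy, hyA⟩)
    · exact Or.inl ⟨hyD, hy⟩
  calc μ (D ∩ A i) ≤ μ (D \ ⋃ k ∈ v, k.2.2) + ∑ k ∈ v, μ (k.2.2 ∩ A i) :=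
        (measure_mono hcover).trans <| (measure_union_le _ _).trans
          (add_le_add_right (measure_biUnion_finset_le _ _) _)
    _ ≤ η / 2 + ∑ k ∈ v, c * μ k.2.2 := add_le_add hrest (Finset.sum_le_sum hi)
    _ ≤ η / 2 + c * (μ D + ε) := by
        rw [← Finset.mul_sum]
        gcongr
        exact hsum.trans hμU
    _ ≤ η / 2 + (c * μ D + η / 2) := by
        rw [mul_add, mul_comm c ε]
        gcongr
    _ = c * μ D + η := by rw [add_left_comm, ENNReal.add_halves]

end VitaliCovering

section UnimodularCover

lemma exists_rat_lt_den_and_abs_sub_lt {x : ℝ} (hx : Irrational x) (M : ℕ) :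
    ∃ q : ℚ, M < q.den ∧ |x - q| < 1 / (q.den : ℝ) ^ 2 := by
  obtain ⟨ε, hfar, hε : 0 < ε⟩ := ((hx.eventually_forall_le_dist_cast_rat_of_den_le M).filter_mono
    (nhdsWithin_le_nhds (s := Ioi 0)) |>.and self_mem_nhdsWithin).exists
  obtain ⟨n, hn⟩ := exists_nat_one_div_lt hε
  obtain ⟨q, hq, hqn⟩ := Real.exists_rat_abs_sub_le_and_den_le x n.succ_pos
  have hden : (1 : ℝ) ≤ q.den := Nat.one_le_cast.2 q.den_pos
  push_cast at hq
  refine ⟨q, not_le.1 fun hqM => (hfar q hqM).not_gt ?_, hq.trans_lt ?_⟩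
  · refine (hq.trans (one_div_le_one_div_of_le (by positivity) ?_)).trans_lt hn
    nlinarith
  · have : (q.den : ℝ) ≤ n + 1 := by exact_mod_cast hqn
    rw [sq]
    gcongr
    linarith

lemma unimodularInterval_subset_closedBall {a b c d : ℤ} {x : ℝ} (hdet : a * d - b * c = 1)
    (hc : 0 < c) (hcd : c ≤ d) (hx : |x - a / c| ≤ 1 / (c : ℝ) ^ 2) :
    unimodularInterval a b c d ⊆ Metric.closedBall x (2 / (c : ℝ) ^ 2) := by
  have hcR : (0 : ℝ) < c := Int.cast_pos.2 hc
  have hcdR : (c : ℝ) ≤ d := Int.cast_le.2 hcd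
  have hdR : (0 : ℝ) < d := hcR.trans_le hcdR
  have hdetR : (a : ℝ) * d - b * c = 1 := by exact_mod_cast hdet
  have hlo : a / c - b / d ≤ (1 / c ^ 2 : ℝ) := by
    rw [div_sub_div _ _ hcR.ne' hdR.ne', mul_comm (c : ℝ) b, hdetR, sq]
    gcongr
  have hhi : (a + b) / (c + d) ≤ (a / c : ℝ) := by
    rw [div_le_div_iff₀ (by positivity) hcR]
    linarith
  rintro y ⟨hy1, hy2⟩
  rw [Metric.mem_closedBall, Real.dist_eq, abs_sub_comm]
  have := abs_le.1 hx
  have htwo : (2 / c ^ 2 : ℝ) = 1 / c ^ 2 + 1 / c ^ 2 := by ring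
  rw [htwo, abs_le]
  constructor <;> linarith [one_div_pos.2 (pow_pos hcR 2)]

lemma exists_unimodularInterval_near {x : ℝ} (hx : Irrational x) {N : ℤ} (hN : 1 ≤ N) {ρ : ℝ}
    (hρ : 0 < ρ) :
    ∃ a b c d : ℤ, a * d - b * c = 1 ∧ 0 < c ∧ N * c ≤ d ∧ d ≤ (N + 1) * c ∧
      2 / (c : ℝ) ^ 2 ≤ ρ ∧
        unimodularInterval a b c d ⊆ Metric.closedBall x (2 / (c : ℝ) ^ 2) := by
  obtain ⟨M, hM⟩ := exists_nat_gt (2 / ρ)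
  obtain ⟨q, hMq, hq⟩ := exists_rat_lt_den_and_abs_sub_lt hx M
  have hden : 0 < (q.den : ℤ) := Int.natCast_pos.2 q.den_pos
  obtain ⟨b, d, hdet, hlo, hhi⟩ := exists_det_eq_one_mem_Ico q.isCoprime_num_den hden N
  refine ⟨q.num, b, q.den, d, hdet, hden, hlo, hhi.le, ?_, unimodularInterval_subset_closedBall hdet
    hden ((le_mul_of_one_le_left hden.le hN).trans hlo) ?_⟩
  · have hone : (1 : ℝ) ≤ q.den := Nat.one_le_cast.2 q.den_pos
    have : 2 / ρ ≤ q.den := hM.le.trans (Nat.cast_le.2 hMq.le)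
    rw [div_le_comm₀ (by positivity) hρ, Int.cast_natCast]
    nlinarith
  · rw [Int.cast_natCast, ← Rat.cast_def]
    exact hq.le

lemma volume_closedBall_le_unimodularInterval {a b c d N : ℤ} (hdet : a * d - b * c = 1)
    (hc : 0 < c) (hd : 0 < d) (hN : 1 ≤ N) (hdc : d ≤ (N + 1) * c) (x : ℝ) :
    volume (Metric.closedBall x (3 * (2 / (c : ℝ) ^ 2))) ≤
      Real.toNNReal (12 * ((N + 1) * (N + 2))) * volume (unimodularInterval a b c d) := by
  have : (0 : ℝ) < c := Int.cast_pos.2 hc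
  have : (0 : ℝ) < d := Int.cast_pos.2 hd
  have : (1 : ℝ) ≤ N := by exact_mod_cast hN
  have hdcR : (d : ℝ) ≤ (N + 1) * c := by exact_mod_cast hdc
  rw [Real.volume_closedBall, volume_unimodularInterval hdet hc hd,
    ENNReal.ofNNReal_toNNReal, ← ENNReal.ofReal_mul (by positivity)]
  refine ENNReal.ofReal_le_ofReal ?_
  have hprod : (d : ℝ) * (c + d) ≤ (N + 1) * c * (c + (N + 1) * c) := by gcongr
  rw [← div_eq_mul_inv, le_div_iff₀ (by positivity)]
  calc 2 * (3 * (2 / (c : ℝ) ^ 2)) * ((d : ℝ) * (c + d))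
      ≤ 2 * (3 * (2 / (c : ℝ) ^ 2)) * ((N + 1 : ℝ) * c * (c + (N + 1) * c)) := by gcongr
    _ = 12 * ((N + 1 : ℝ) * (N + 2)) := by
        field_simp
        ring

end UnimodularCover

section Equidistribution

lemma eventually_volume_inter_le_of_unimodularInterval {ι : Type*} {l : Filter ι}
    {A : ι → Set ℝ} {κ C : ℝ} (hκ : 0 < κ)
    (h : ∀ a b c d : ℤ, a * d - b * c = 1 → 0 < c → 0 < d → c ≤ κ * d →
      ∀ᶠ i in l, volume (unimodularInterval a b c d ∩ A i) ≤
        ENNReal.ofReal C * volume (unimodularInterval a b c d))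
    {D : Set ℝ} (hD : volume D ≠ ⊤) {η : ℝ≥0∞} (hη : η ≠ 0) :
    ∀ᶠ i in l, volume (D ∩ A i) ≤ ENNReal.ofReal C * volume D + η := by
  set N : ℤ := ⌈1 / κ⌉
  have hN : 1 ≤ N := Int.one_le_ceil_iff.2 (by positivity)
  have hNκ : 1 ≤ N * κ := (div_le_iff₀ hκ).1 (Int.le_ceil _)
  have hirrational : ∀ᵐ x : ℝ, Irrational x := (countable_range ((↑) : ℚ → ℝ)).ae_notMem _
  refine eventually_measure_inter_le_of_fine_cover
    (K := Real.toNNReal (12 * ((N + 1) * (N + 2)))) ENNReal.ofReal_ne_top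
    (hirrational.mono fun x hx ρ hρ => ?_) hD hη
  obtain ⟨a, b, c, d, hdet, hc, hNc, hdN, hsmall, hsub⟩ := exists_unimodularInterval_near hx hN hρ
  have hd : 0 < d := (mul_pos (by linarith) hc).trans_le hNc
  have hcd : c ≤ κ * d := by
    have hcR : (0 : ℝ) < c := Int.cast_pos.2 hc
    have : (N : ℝ) * c ≤ d := by exact_mod_cast hNc
    nlinarith
  refine ⟨_, hsmall, _, hsub, volume_closedBall_le_unimodularInterval hdet hc hd hN hdN x, ?_,
    isClosed_Icc, h a b c d hdet hc hd hcd⟩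
  rw [unimodularInterval, interior_Icc, nonempty_Ioo, ← sub_pos,
    unimodularInterval_endpoints_sub hdet hc hd]
  have : (0 : ℝ) < c := Int.cast_pos.2 hc
  have : (0 : ℝ) < d := Int.cast_pos.2 hd
  positivity

lemma exists_one_add_mul_distortion_lt {G : ℝ → ℝ} {C : ℝ} (hG : ContinuousAt G 0)
    (hC : G 0 < C) :
    ∃ κ, 0 < κ ∧ κ < 1 ∧ (1 + κ) * G (distortion κ) < C := by
  have hlim : Tendsto (fun κ : ℝ => (1 + κ) * G (distortion κ)) (𝓝[>] 0) (𝓝 ((1 + 0) * G 0)) :=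
    ((tendsto_id.const_add 1).mul (hG.tendsto.comp tendsto_distortion)).mono_left
      nhdsWithin_le_nhds
  rw [add_zero, one_mul] at hlim
  have hIoo : ∀ᶠ κ : ℝ in 𝓝[>] 0, 0 < κ ∧ κ < 1 := Ioo_mem_nhdsGT one_pos
  obtain ⟨κ, hκ, hlt⟩ := (hIoo.and (hlim.eventually_lt_const hC)).exists
  exact ⟨κ, hκ.1, hκ.2, hlt⟩

variable {D : Set ℝ} {t C : ℝ} {η : ℝ≥0∞}

lemma eventually_volume_inter_logDenom_le (hC : limitMeasure.real (Iic t) < C)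
    (hD : volume D ≠ ⊤) (hη : η ≠ 0) :
    ∀ᶠ δ in 𝓝[>] 0, volume (D ∩ {x | logDenom δ x ≤ t}) ≤ ENNReal.ofReal C * volume D + η := by
  obtain ⟨κ, hκ0, hκ1, hκC⟩ := exists_one_add_mul_distortion_lt
    (G := fun ω => limitMeasure.real (Iic (t + ω)))
    (continuous_limitMeasure_real_Iic.comp (continuous_const_add t)).continuousAt
    (by simpa using hC)
  exact eventually_volume_inter_le_of_unimodularInterval hκ0 (fun a b c d hdet hc hd hcd =>
    eventually_volume_unimodularInterval_inter_logDenom_le hdet hc hd hκ0 hκ1 hcd hκC) hD hη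

lemma eventually_volume_inter_lt_logDenom (hC : 1 - limitMeasure.real (Iic t) < C)
    (hD : volume D ≠ ⊤) (hη : η ≠ 0) :
    ∀ᶠ δ in 𝓝[>] 0, volume (D ∩ {x | t < logDenom δ x}) ≤ ENNReal.ofReal C * volume D + η := by
  obtain ⟨κ, hκ0, hκ1, hκC⟩ := exists_one_add_mul_distortion_lt
    (G := fun ω => 1 - limitMeasure.real (Iic (t - ω)))
    (continuous_const.sub (continuous_limitMeasure_real_Iic.comp
      (continuous_const.sub continuous_id))).continuousAt (by simpa using hC)
  exact eventually_volume_inter_le_of_unimodularInterval hκ0 (fun a b c d hdet hc hd hcd =>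
    eventually_volume_unimodularInterval_inter_lt_logDenom hdet hc hd hκ0 hκ1 hcd hκC) hD hη

lemma eventually_measureReal_lt_of_eventually_measure_le {ι α : Type*} [MeasurableSpace α]
    {μ : Measure α} {l : Filter ι} {D : Set α} {A : ι → Set α} {h : ℝ} (hh : 0 ≤ h)
    (hD : μ D ≠ ⊤)
    (hle : ∀ C, h < C → ∀ η : ℝ≥0∞, η ≠ 0 →
      ∀ᶠ i in l, μ (D ∩ A i) ≤ ENNReal.ofReal C * μ D + η)
    {ε : ℝ} (hε : 0 < ε) : ∀ᶠ i in l, μ.real (D ∩ A i) < μ.real D * h + ε := by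
  have : 0 ≤ μ.real D := measureReal_nonneg
  obtain ⟨θ, hθ, hθm⟩ : ∃ θ, 0 < θ ∧ μ.real D * θ < ε / 2 := by
    refine ⟨ε / (2 * (μ.real D + 1)), by positivity, ?_⟩
    rw [mul_div_assoc', div_lt_div_iff₀ (by positivity) two_pos]
    nlinarith
  have hη : ENNReal.ofReal (ε / 2) ≠ 0 := (ENNReal.ofReal_pos.2 (by linarith)).ne'
  filter_upwards [hle (h + θ) (by linarith) _ hη] with i hi
  rw [← ofReal_measureReal hD, ← ENNReal.ofReal_mul (by linarith),
    ← ENNReal.ofReal_add (by positivity) (by linarith)] at hi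
  have := ENNReal.toReal_le_of_le_ofReal (by positivity) hi
  rw [measureReal_def]
  linarith

theorem tendsto_volume_real_inter_logDenom_le (hD : volume D ≠ ⊤) (t : ℝ) :
    Tendsto (fun δ => volume.real (D ∩ {x | logDenom δ x ≤ t})) (𝓝[>] 0)
      (𝓝 (volume.real D * limitMeasure.real (Iic t))) := by
  rw [Metric.tendsto_nhds]
  intro ε hε
  filter_upwards [
    eventually_measureReal_lt_of_eventually_measure_le measureReal_nonneg hD
      (fun C hC η hη => eventually_volume_inter_logDenom_le (t := t) hC hD hη) hε,
    eventually_measureReal_lt_of_eventually_measure_le (sub_nonneg.2 measureReal_le_one) hD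
      (fun C hC η hη => eventually_volume_inter_lt_logDenom (t := t) hC hD hη) hε] with δ hle hgt
  have hsplit := volume_real_inter_logDenom_le_add_lt hD δ t
  rw [Real.dist_eq, abs_lt]
  constructor <;> linarith

end Equidistribution

section Conclusion

lemma integral_limitMeasure (F : ℝ → ℝ) :
    ∫ s, F s ∂limitMeasure = ∫ s, F s * etaLog s := by
  rw [limitMeasure, integral_withDensity_eq_integral_toReal_smul measurable_etaLog.ennreal_ofReal
    (ae_of_all _ fun _ => ENNReal.ofReal_lt_top)]
  simp only [ENNReal.toReal_ofReal (etaLog_nonneg _), smul_eq_mul, mul_comm]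

/-- The law of `logDenom δ x` when `x` is uniformly distributed on `D`. -/
noncomputable def logDenomLaw {D : Set ℝ} (hD0 : volume D ≠ 0) (hD : volume D ≠ ⊤) (δ : ℝ) :
    ProbabilityMeasure ℝ :=
  have := ProbabilityTheory.cond_isProbabilityMeasure_of_finite hD0 hD
  ⟨(ProbabilityTheory.cond volume D).map (logDenom δ),
    Measure.isProbabilityMeasure_map (measurable_logDenom δ).aemeasurable⟩

variable {D : Set ℝ}

lemma logDenomLaw_apply (hD0 : volume D ≠ 0) (hD : volume D ≠ ⊤) (δ : ℝ) {E : Set ℝ}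
    (hE : MeasurableSet E) :
    (logDenomLaw hD0 hD δ : Measure ℝ) E = (volume D)⁻¹ * volume (D ∩ {x | logDenom δ x ∈ E}) := by
  change (ProbabilityTheory.cond volume D).map (logDenom δ) E = _
  rw [Measure.map_apply (measurable_logDenom δ) hE,
    ProbabilityTheory.cond_apply' (measurable_logDenom δ hE)]
  rfl

lemma integral_logDenomLaw (hD0 : volume D ≠ 0) (hD : volume D ≠ ⊤) (δ : ℝ) {F : ℝ → ℝ}
    (hF : Continuous F) :
    ∫ s, F s ∂(logDenomLaw hD0 hD δ : Measure ℝ) =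
      (volume.real D)⁻¹ * ∫ x in D, F (logDenom δ x) := by
  change ∫ s, F s ∂(ProbabilityTheory.cond volume D).map (logDenom δ) = _
  rw [integral_map (measurable_logDenom δ).aemeasurable hF.aestronglyMeasurable,
    ProbabilityTheory.cond, integral_smul_measure, ENNReal.toReal_inv, smul_eq_mul, measureReal_def]

lemma tendsto_logDenomLaw (hD0 : volume D ≠ 0) (hD : volume D ≠ ⊤) :
    Tendsto (logDenomLaw hD0 hD) (𝓝[>] 0) (𝓝 ⟨limitMeasure, inferInstance⟩) := by
  refine tendsto_probabilityMeasure_of_tendsto_Iic fun t => ?_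
  have hvol : volume.real D ≠ 0 := (ENNReal.toReal_pos hD0 hD).ne'
  have hlim := (tendsto_volume_real_inter_logDenom_le hD t).const_mul (volume.real D)⁻¹
  rw [inv_mul_cancel_left₀ hvol] at hlim
  refine hlim.congr fun δ => ?_
  rw [measureReal_def _ (Iic t), logDenomLaw_apply hD0 hD δ measurableSet_Iic, ENNReal.toReal_mul,
    ENNReal.toReal_inv]
  rfl

lemma logDenomLaw_tail_le (hD0 : volume D ≠ 0) (hD : volume D ≠ ⊤) {M δ : ℝ} (hM : 0 ≤ M)
    (hDM : D ⊆ Icc (-M) M) (hδ : 0 < δ) (hδ1 : δ ≤ 1) (t : ℝ) :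
    (logDenomLaw hD0 hD δ : Measure ℝ) {s | t < |s|} ≤
      ENNReal.ofReal ((volume.real D)⁻¹ * (5 * (2 * M + 3)) * Real.exp (-2 * t)) := by
  have hvol : 0 < volume.real D := ENNReal.toReal_pos hD0 hD
  have hmeas : MeasurableSet {s : ℝ | t < |s|} := measurableSet_lt measurable_const measurable_norm
  rw [logDenomLaw_apply hD0 hD δ hmeas, mul_assoc, ENNReal.ofReal_mul (inv_nonneg.2 hvol.le),
    ENNReal.ofReal_inv_of_pos hvol, ofReal_measureReal hD]
  gcongr
  exact (measure_mono (inter_subset_inter_left _ hDM)).trans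
    (volume_Icc_inter_lt_abs_logDenom_le hM hδ hδ1 t)

lemma max_exp_mul_exp_neg_mul {a : ℝ} (ha : 0 ≤ a) (s : ℝ) :
    max (Real.exp (a * s)) (Real.exp (-a * s)) = Real.exp (a * |s|) := by
  rw [← Real.exp_monotone.map_max, neg_mul, ← abs_eq_max_neg, abs_mul, abs_of_nonneg ha]

theorem smallest_denominator_log_test_function_limit_general (hD : Bornology.IsBounded D)
    {a C : ℝ} (ha : a < 2) {F : ℝ → ℝ} (hF : Continuous F)
    (hbound : ∀ s, |F s| ≤ C * Real.exp (a * |s|)) :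
    Tendsto (fun δ : ℝ => ∫ x in D, F (Real.log (qmin x δ) + (1 / 2) * Real.log δ))
      (𝓝[>] 0) (𝓝 ((volume D).toReal * ∫ s : ℝ, F s * etaLog s)) := by
  rcases eq_or_ne (volume D) 0 with hD0 | hD0
  · simp only [setIntegral_measure_zero _ hD0, hD0, ENNReal.toReal_zero, zero_mul,
      tendsto_const_nhds]
  obtain ⟨M, hM, hDM⟩ := hD.subset_closedBall_lt 0 0
  rw [Real.closedBall_eq_Icc, zero_sub, zero_add] at hDM
  have hDfin : volume D ≠ ⊤ := hD.measure_lt_top.ne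
  have hvol : (volume D).toReal ≠ 0 := (ENNReal.toReal_pos hD0 hDfin).ne'
  have hsmall : ∀ᶠ δ : ℝ in 𝓝[>] 0, 0 < δ ∧ δ ≤ 1 := Ioc_mem_nhdsGT one_pos
  have hlim := tendsto_integral_of_tendsto_of_exp_tail (tendsto_logDenomLaw hD0 hDfin) ha two_pos
    (by positivity) (hsmall.mono fun δ hδ => logDenomLaw_tail_le hD0 hDfin hM.le hDM hδ.1 hδ.2)
    hF hbound
  simp only [integral_logDenomLaw hD0 hDfin _ hF] at hlim
  have := hlim.const_mul (volume D).toReal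
  simp only [measureReal_def, mul_inv_cancel_left₀ hvol, ProbabilityMeasure.coe_mk,
    integral_limitMeasure] at this
  exact this

end Conclusion

theorem smallest_denominator_log_test_function_limit
    (D : Set ℝ) (hD : D ⊆ Set.Icc 0 1) (hDI : D.OrdConnected)
    (a : ℝ) (ha0 : 0 ≤ a) (ha2 : a < 2) (C : ℝ) (hC : 0 < C)
    (F : ℝ → ℝ) (hFcont : Continuous F)
    (hFbound : ∀ s : ℝ, |F s| ≤ C * max (Real.exp (a * s)) (Real.exp (-a * s))) :
    Tendsto (fun δ : ℝ =>
        ∫ x in D, F (Real.log (qmin x δ) + (1 / 2) * Real.log δ))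
      (nhdsWithin 0 (Set.Ioi 0))
      (nhds ((volume D).toReal * ∫ s : ℝ, F s * etaLog s)) :=
  smallest_denominator_log_test_function_limit_general ((Metric.isBounded_Icc 0 1).subset hD) ha2
    hFcont fun s => max_exp_mul_exp_neg_mul ha0 s ▸ hFbound s
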